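/- arXiv:1504.00954 — 12 statements merged into one kernel-verified Lean document; each statement's English description precedes it below -/
import Mathlib

section
/- Let G be a finite simple graph with m edges, and let ≺ be the strict total order on vertices defined by u ≺ v iff deg(u) < deg(v), or deg(u) = deg(v) and u < v in a fixed linear order on the vertex set. Then for every vertex v, the number of neighbors w of v with v ≺ w is at most √(2m); equivalently, (card {w ∈ Γ(v) : v ≺ w})² ≤ 2m. -/
open Finset SimpleGraph

/-- The degree-then-label strict total order on vertices: `u ≺ v` iff
`deg u < deg v`, or `deg u = deg v` and `u < v` in a fixed linear order. -/
abbrev prec {V : Type*} [Fintype V] [LinearOrder V] (G : SimpleGraph V)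
    [DecidableRel G.Adj] (u v : V) : Prop :=
  G.degree u < G.degree v ∨ (G.degree u = G.degree v ∧ u < v)

/-- For every vertex `v`, the number of neighbors `w` of `v` with `v ≺ w`
is at most `√(2m)`, i.e. its square is at most `2m`. -/
theorem card_prec_neighbors_sq_le_two_mul_edges
    {V : Type*} [Fintype V] [LinearOrder V]
    (G : SimpleGraph V) [DecidableRel G.Adj] (v : V) :
    ((G.neighborFinset v).filter (fun w => prec G v w)).card ^ 2
      ≤ 2 * G.edgeFinset.card := by
  rw [← G.sum_degrees_eq_twice_card_edges]
  set S := (G.neighborFinset v).filter (fun w => prec G v w) with hS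
  have h1 : S.card ≤ G.degree v := by
    rw [← G.card_neighborFinset_eq_degree]
    exact Finset.card_filter_le _ _
  have h2 : ∀ w ∈ S, S.card ≤ G.degree w := by
    intro w hw
    have h3 : prec G v w := (Finset.mem_filter.mp hw).2
    rcases h3 with h | h
    · omega
    · omega
  calc S.card ^ 2 = S.card • S.card := by rw [smul_eq_mul, sq]
    _ ≤ ∑ w ∈ S, G.degree w := Finset.card_nsmul_le_sum _ _ _ h2
    _ ≤ ∑ w, G.degree w :=
      Finset.sum_le_sum_of_subset (Finset.subset_univ S)
end

section
/- Let G be a finite simple graph with m edges and let ≺ be the degree-then-label order on vertices. Then for every pair of adjacent vertices v and x, the number of vertices w such that {v, x, w} forms a triangle of G and x ≺ w is at most √(2m); equivalently, (card {w : w adjacent to v, w adjacent to x, x ≺ w})² ≤ 2m. -/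
open Finset SimpleGraph

/-- For every pair of adjacent vertices `v` and `x`, the number of vertices `w`
such that `{v, x, w}` is a triangle and `x ≺ w` is at most `√(2m)`, i.e. its
square is at most `2m`. -/
theorem card_assoc_triangles_sq_le_two_mul_edges
    {V : Type*} [Fintype V] [LinearOrder V]
    (G : SimpleGraph V) [DecidableRel G.Adj] (v x : V) (hvx : G.Adj v x) :
    (Finset.univ.filter (fun w => G.Adj v w ∧ G.Adj x w ∧ prec G x w)).card ^ 2
      ≤ 2 * G.edgeFinset.card := by
  rw [← G.sum_degrees_eq_twice_card_edges, sq]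
  set S := Finset.univ.filter (fun w => G.Adj v w ∧ G.Adj x w ∧ prec G x w) with hS
  have h1 : S.card ≤ G.degree x := by
    rw [← G.card_neighborFinset_eq_degree]
    apply Finset.card_le_card
    intro w hw
    rw [G.mem_neighborFinset]
    exact (Finset.mem_filter.mp hw).2.2.1
  have h2 : ∀ w ∈ S, S.card ≤ G.degree w := by
    intro w hw
    have h3 : prec G x w := (Finset.mem_filter.mp hw).2.2.2
    rcases h3 with h | h <;> omega
  calc S.card * S.card = S.card • S.card := by rw [smul_eq_mul]
    _ ≤ ∑ w ∈ S, G.degree w := Finset.card_nsmul_le_sum S _ _ h2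
    _ ≤ ∑ w, G.degree w :=
      Finset.sum_le_sum_of_subset (Finset.subset_univ S)
end

section
/- Let G be a finite simple graph with m edges and ≺ the degree-then-label order on its vertices. Then for every vertex v, Σ_{x ∈ Γ(v)} (t_{(v,x)})² ≤ √(2m) · t_v, where t_{(v,x)} is the number of vertices w with {v,x,w} a triangle and x ≺ w, and t_v is the number of triangles containing v. -/
open Finset SimpleGraph

theorem prec_card_sq_le {V : Type*} [Fintype V] [LinearOrder V]
    (G : SimpleGraph V) [DecidableRel G.Adj] (v x : V) :
    (Finset.univ.filter (fun w => G.Adj v w ∧ G.Adj x w ∧ prec G x w)).card ^ 2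
      ≤ 2 * G.edgeFinset.card := by
  set S := Finset.univ.filter (fun w => G.Adj v w ∧ G.Adj x w ∧ prec G x w) with hS
  have h1 : S.card ≤ G.degree x := by
    rw [← G.card_neighborFinset_eq_degree]
    apply Finset.card_le_card
    intro w hw
    simp only [hS, Finset.mem_filter] at hw
    simpa using hw.2.2.1
  have h2 : S.card * S.card ≤ ∑ w ∈ S, G.degree w := by
    rw [← smul_eq_mul]
    apply Finset.card_nsmul_le_sum
    intro w hw
    simp only [hS, Finset.mem_filter, prec] at hw
    omega
  have h3 : ∑ w ∈ S, G.degree w ≤ ∑ w, G.degree w :=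
    Finset.sum_le_sum_of_subset (Finset.subset_univ _)
  rw [G.sum_degrees_eq_twice_card_edges] at h3
  nlinarith

theorem sum_prec_card_le {V : Type*} [Fintype V] [LinearOrder V]
    (G : SimpleGraph V) [DecidableRel G.Adj] (v : V) :
    ∑ x ∈ G.neighborFinset v,
      (Finset.univ.filter (fun w => G.Adj v w ∧ G.Adj x w ∧ prec G x w)).card
      ≤ ((G.cliqueFinset 3).filter (fun Δ => v ∈ Δ)).card := by
  rw [← Finset.card_sigma]
  apply Finset.card_le_card_of_injOn (fun p => {v, p.1, p.2})
  · rintro ⟨x, w⟩ h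
    simp only [Finset.coe_sigma, Set.mem_sigma_iff, Finset.mem_coe, mem_neighborFinset,
      Finset.mem_filter, Finset.mem_univ, true_and] at h
    simp only [Finset.mem_coe, Finset.mem_filter, mem_cliqueFinset_iff, is3Clique_triple_iff]
    exact ⟨⟨h.1, h.2.1, h.2.2.1⟩, by simp⟩
  · rintro ⟨x, w⟩ h ⟨x', w'⟩ h' he
    simp only [Finset.coe_sigma, Set.mem_sigma_iff, Finset.mem_coe, mem_neighborFinset,
      Finset.mem_filter, Finset.mem_univ, true_and] at h h'
    obtain ⟨a1, a2, a3, a4⟩ := h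
    obtain ⟨b1, b2, b3, b4⟩ := h'
    change ({v, x, w} : Finset V) = {v, x', w'} at he
    have e1 : x ∈ ({v, x', w'} : Finset V) := by
      have : x ∈ ({v, x, w} : Finset V) := by simp
      exact he ▸ this
    have e2 : w ∈ ({v, x', w'} : Finset V) := by
      have : w ∈ ({v, x, w} : Finset V) := by simp
      exact he ▸ this
    simp only [Finset.mem_insert, Finset.mem_singleton] at e1 e2
    have n1 := a1.ne'
    have n2 := a2.ne'
    have n3 := a3.ne
    rcases e1 with e1 | rfl | rfl
    · exact absurd e1 n1
    · rcases e2 with e2 | e2 | rfl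
      · exact absurd e2 n2
      · exact absurd e2.symm n3
      · rfl
    · rcases e2 with e2 | rfl | e2
      · exact absurd e2 n2
      · exfalso
        rcases a4 with a | ⟨a, a'⟩ <;> rcases b4 with b | ⟨b, b'⟩
        · omega
        · omega
        · omega
        · exact lt_asymm a' b'
      · exact absurd e2.symm n3

/-- For every vertex `v`, the sum over the neighbors `x` of `v` of
`t_{(v,x)}²` is at most `√(2m) · t_v`. -/
theorem sum_sq_assoc_le_sqrt_two_m_mul_tv
    {V : Type*} [Fintype V] [LinearOrder V]
    (G : SimpleGraph V) [DecidableRel G.Adj] (v : V) :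
    ∑ x ∈ G.neighborFinset v,
        (((Finset.univ.filter
            (fun w => G.Adj v w ∧ G.Adj x w ∧ prec G x w)).card : ℝ)) ^ 2
      ≤ Real.sqrt (2 * G.edgeFinset.card) *
          (((G.cliqueFinset 3).filter (fun Δ => v ∈ Δ)).card : ℝ) := by
  have h := sum_prec_card_le G v
  have h' : (∑ x ∈ G.neighborFinset v,
      ((Finset.univ.filter (fun w => G.Adj v w ∧ G.Adj x w ∧ prec G x w)).card : ℝ))
      ≤ (((G.cliqueFinset 3).filter (fun Δ => v ∈ Δ)).card : ℝ) := by exact_mod_cast h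
  refine le_trans ?_ (mul_le_mul_of_nonneg_left h' (Real.sqrt_nonneg _))
  rw [Finset.mul_sum]
  apply Finset.sum_le_sum
  intro x _
  rw [sq]
  apply mul_le_mul_of_nonneg_right _ (Nat.cast_nonneg _)
  apply Real.le_sqrt_of_sq_le
  exact_mod_cast prec_card_sq_le G v x
end

section
/- For every finite simple graph G with m edges, the number t of triangles of G satisfies t ≤ (4/3) · m^{3/2}. -/
open Finset SimpleGraph

lemma triangles_at_form {V : Type*} [Fintype V] [DecidableEq V]
    (G : SimpleGraph V) [DecidableRel G.Adj] (v : V) (s : Finset V)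
    (hs : s ∈ (G.cliqueFinset 3).filter (fun s => v ∈ s)) :
    ∃ x y, G.Adj v x ∧ G.Adj v y ∧ G.Adj x y ∧ s = {v, x, y} := by
  rw [Finset.mem_filter, mem_cliqueFinset_iff, is3Clique_iff] at hs
  obtain ⟨⟨a, b, c, hab, hac, hbc, rfl⟩, hv⟩ := hs
  simp only [Finset.mem_insert, Finset.mem_singleton] at hv
  rcases hv with rfl | rfl | rfl
  · exact ⟨b, c, hab, hac, hbc, rfl⟩
  · exact ⟨a, c, hab.symm, hbc, hac, by ext z; simp; tauto⟩
  · exact ⟨a, b, hac.symm, hbc.symm, hab, by ext z; simp; tauto⟩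

lemma triangles_at_le_edges {V : Type*} [Fintype V] [DecidableEq V]
    (G : SimpleGraph V) [DecidableRel G.Adj] (v : V) :
    ((G.cliqueFinset 3).filter (fun s => v ∈ s)).card ≤ G.edgeFinset.card := by
  refine le_trans (Finset.card_le_card (t := G.edgeFinset.image
    (fun e => insert v e.toFinset)) ?_) Finset.card_image_le
  intro s hs
  obtain ⟨x, y, hx, hy, hxy, rfl⟩ := triangles_at_form G v s hs
  refine Finset.mem_image.2 ⟨s(x, y), by simpa using hxy, ?_⟩
  ext z; simp

lemma triangles_at_le_degree_sq {V : Type*} [Fintype V] [DecidableEq V]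
    (G : SimpleGraph V) [DecidableRel G.Adj] (v : V) :
    ((G.cliqueFinset 3).filter (fun s => v ∈ s)).card ≤ G.degree v * G.degree v := by
  rw [← G.card_neighborFinset_eq_degree, ← Finset.card_product]
  refine le_trans (Finset.card_le_card (t := (G.neighborFinset v ×ˢ G.neighborFinset v).image
    (fun p => {v, p.1, p.2})) ?_) Finset.card_image_le
  intro s hs
  obtain ⟨x, y, hx, hy, hxy, rfl⟩ := triangles_at_form G v s hs
  exact Finset.mem_image.2 ⟨(x, y), by simp [hx, hy], rfl⟩

/-- The number of triangles of a finite simple graph with `m` edges is at most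
`(4/3) · m^{3/2}`. -/
theorem card_triangles_le_four_thirds_m_pow
    {V : Type*} [Fintype V] [DecidableEq V]
    (G : SimpleGraph V) [DecidableRel G.Adj] :
    ((G.cliqueFinset 3).card : ℝ)
      ≤ (4 / 3) * (G.edgeFinset.card : ℝ) ^ ((3 : ℝ) / 2) := by
  have hcount : ∑ v : V, ((G.cliqueFinset 3).filter (fun s => v ∈ s)).card
      = 3 * (G.cliqueFinset 3).card := by
    simp_rw [Finset.card_filter]
    rw [Finset.sum_comm]
    rw [Finset.sum_congr rfl (g := fun _ => 3), Finset.sum_const, smul_eq_mul, mul_comm]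
    intro s hs
    rw [← Finset.card_filter, Finset.filter_univ_mem]
    exact (mem_cliqueFinset_iff.1 hs).card_eq
  have hdeg := G.sum_degrees_eq_twice_card_edges
  have hm : (0 : ℝ) ≤ G.edgeFinset.card := Nat.cast_nonneg _
  have hbd : ∀ v : V, (((G.cliqueFinset 3).filter (fun s => v ∈ s)).card : ℝ)
      ≤ √(G.edgeFinset.card : ℝ) * (G.degree v : ℝ) := by
    intro v
    have h1 : (((G.cliqueFinset 3).filter (fun s => v ∈ s)).card : ℝ) ≤ G.edgeFinset.card := by
      exact_mod_cast triangles_at_le_edges G v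
    have h2 : (((G.cliqueFinset 3).filter (fun s => v ∈ s)).card : ℝ)
        ≤ (G.degree v : ℝ) * G.degree v := by
      exact_mod_cast triangles_at_le_degree_sq G v
    refine le_of_sq_le_sq ?_ (by positivity)
    rw [mul_pow, Real.sq_sqrt hm, sq, sq]
    exact mul_le_mul h1 h2 (Nat.cast_nonneg _) hm
  have hsum := Finset.sum_le_sum (fun v (_ : v ∈ (Finset.univ : Finset V)) => hbd v)
  rw [← Finset.mul_sum, ← Nat.cast_sum, ← Nat.cast_sum, hcount, hdeg] at hsum
  have hpow : (G.edgeFinset.card : ℝ) ^ ((3 : ℝ) / 2)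
      = √(G.edgeFinset.card : ℝ) * G.edgeFinset.card := by
    rw [Real.sqrt_eq_rpow, show (3 : ℝ) / 2 = 1 / 2 + 1 by norm_num,
      Real.rpow_add_one' hm (by norm_num)]
  rw [hpow]
  push_cast at hsum
  have : 0 ≤ √(G.edgeFinset.card : ℝ) * G.edgeFinset.card := by positivity
  linarith
end

section
/- Let G be a finite simple graph with m edges and t ≥ 1 triangles. Let 0 < ε < 1 and let m̄, t̄ be positive reals with m̄ ≥ m/6 and t/4 ≤ t̄ ≤ t. Call a vertex v light if deg(v) ≤ 2m̄/(ε t̄)^{1/3} and t_v ≤ t̄^{2/3}/(2 ε^{1/3}). Then the number of triangles of G all three of whose vertices are non-light is at most 2000 · ε · t. -/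
open Finset SimpleGraph

/-- A vertex `v` is light (w.r.t. `ε`, `m̄`, `t̄`) if
`deg v ≤ 2m̄/(ε t̄)^{1/3}` and `t_v ≤ t̄^{2/3}/(2 ε^{1/3})`. -/
def IsLight {V : Type*} [Fintype V] [DecidableEq V]
    (G : SimpleGraph V) [DecidableRel G.Adj] (ε mbar tbar : ℝ) (v : V) : Prop :=
  (G.degree v : ℝ) ≤ 2 * mbar / (ε * tbar) ^ ((1 : ℝ) / 3) ∧
  (((G.cliqueFinset 3).filter (fun Δ => v ∈ Δ)).card : ℝ)
    ≤ tbar ^ ((2 : ℝ) / 3) / (2 * ε ^ ((1 : ℝ) / 3))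

open scoped Classical in
/-- If `m̄ ≥ m/6` and `t/4 ≤ t̄ ≤ t`, then the number of triangles all of whose
vertices are non-light is at most `2000 · ε · t`. -/
theorem card_all_nonlight_triangles_le
    {V : Type*} [Fintype V] [DecidableEq V]
    (G : SimpleGraph V) [DecidableRel G.Adj]
    (ε mbar tbar : ℝ) (hε0 : 0 < ε) (hε1 : ε < 1)
    (hmbar0 : 0 < mbar) (htbar0 : 0 < tbar)
    (ht1 : 1 ≤ (G.cliqueFinset 3).card)
    (hm : (G.edgeFinset.card : ℝ) / 6 ≤ mbar)
    (ht4 : ((G.cliqueFinset 3).card : ℝ) / 4 ≤ tbar)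
    (htt : tbar ≤ ((G.cliqueFinset 3).card : ℝ)) :
    (((G.cliqueFinset 3).filter
        (fun Δ => ∀ v ∈ Δ, ¬ IsLight G ε mbar tbar v)).card : ℝ)
      ≤ 2000 * ε * ((G.cliqueFinset 3).card : ℝ) := by
  set t : ℝ := ((G.cliqueFinset 3).card : ℝ) with ht
  set x : ℝ := (ε * tbar) ^ ((1 : ℝ) / 3) with hx
  have hx0 : 0 < x := by positivity
  have hx3 : x ^ 3 = ε * tbar := by
    rw [hx, ← Real.rpow_natCast, ← Real.rpow_mul (by positivity)]
    norm_num
  set y : ℝ := ε ^ ((1 : ℝ) / 3) with hy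
  set z : ℝ := tbar ^ ((1 : ℝ) / 3) with hz
  have hy0 : 0 < y := by positivity
  have hz0 : 0 < z := by positivity
  have hxyz : x = y * z := by
    rw [hx, Real.mul_rpow hε0.le htbar0.le]
  have hz2 : tbar ^ ((2 : ℝ) / 3) = z ^ 2 := by
    rw [hz, ← Real.rpow_natCast, ← Real.rpow_mul (by positivity)]
    norm_num
  have hz3 : z ^ 3 = tbar := by
    rw [hz, ← Real.rpow_natCast, ← Real.rpow_mul (by positivity)]
    norm_num
  -- high-degree vertices
  let D : Finset V := univ.filter (fun v => 2 * mbar / x < (G.degree v : ℝ))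
  let T : Finset V := univ.filter (fun v => z ^ 2 / (2 * y) <
    (((G.cliqueFinset 3).filter (fun Δ => v ∈ Δ)).card : ℝ))
  have hD : (D.card : ℝ) ≤ 6 * x := by
    have h1 : (D.card : ℝ) * (2 * mbar / x) ≤ ∑ v ∈ D, (G.degree v : ℝ) := by
      rw [← nsmul_eq_mul]
      exact Finset.card_nsmul_le_sum _ _ _ (fun v hv => (Finset.mem_filter.1 hv).2.le)
    have h2 : ∑ v ∈ D, (G.degree v : ℝ) ≤ ∑ v, (G.degree v : ℝ) :=
      Finset.sum_le_sum_of_subset_of_nonneg (Finset.subset_univ _) (fun _ _ _ => by positivity)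
    have h3 : ∑ v, (G.degree v : ℝ) = 2 * (G.edgeFinset.card : ℝ) := by
      exact_mod_cast G.sum_degrees_eq_twice_card_edges
    have h4 : (D.card : ℝ) * (2 * mbar / x) ≤ 12 * mbar := by linarith
    rw [← mul_div_assoc, div_le_iff₀ hx0] at h4
    nlinarith
  have hT : tbar * (T.card : ℝ) ≤ 6 * x * t := by
    have h1 : (T.card : ℝ) * (z ^ 2 / (2 * y)) ≤
        ∑ v ∈ T, (((G.cliqueFinset 3).filter (fun Δ => v ∈ Δ)).card : ℝ) := by
      rw [← nsmul_eq_mul]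
      exact Finset.card_nsmul_le_sum _ _ _ (fun v hv => (Finset.mem_filter.1 hv).2.le)
    have h2 : ∑ v ∈ T, (((G.cliqueFinset 3).filter (fun Δ => v ∈ Δ)).card : ℝ) ≤
        ∑ v, (((G.cliqueFinset 3).filter (fun Δ => v ∈ Δ)).card : ℝ) :=
      Finset.sum_le_sum_of_subset_of_nonneg (Finset.subset_univ _) (fun _ _ _ => by positivity)
    have h3 : ∑ v, (((G.cliqueFinset 3).filter (fun Δ => v ∈ Δ)).card : ℝ) = 3 * t := by
      have : ∑ v, ((G.cliqueFinset 3).filter (fun Δ => v ∈ Δ)).card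
          = (G.cliqueFinset 3).card * 3 := by
        have e0 : ∑ v, ((G.cliqueFinset 3).filter (fun Δ => v ∈ Δ)).card
            = ∑ Δ ∈ G.cliqueFinset 3, Δ.card := by
          simp only [Finset.card_filter]
          rw [Finset.sum_comm]
          refine Finset.sum_congr rfl (fun Δ _ => ?_)
          simp
        rw [e0, Finset.sum_const_nat]
        intro Δ hΔ
        exact ((SimpleGraph.mem_cliqueFinset_iff).1 hΔ).card_eq
      rw [ht, mul_comm]
      exact_mod_cast this
    have h4 : (T.card : ℝ) * (z ^ 2 / (2 * y)) ≤ 3 * t := by linarith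
    rw [← mul_div_assoc, div_le_iff₀ (by positivity)] at h4
    have h5 := mul_le_mul_of_nonneg_right h4 hz0.le
    rw [← hz3, hxyz]
    linarith
  have hN : (((G.cliqueFinset 3).filter
        (fun Δ => ∀ v ∈ Δ, ¬ IsLight G ε mbar tbar v)).card : ℝ)
      ≤ ((D.card : ℝ) + T.card) ^ 3 / 6 := by
    have h1 : (G.cliqueFinset 3).filter (fun Δ => ∀ v ∈ Δ, ¬ IsLight G ε mbar tbar v)
        ⊆ (D ∪ T).powersetCard 3 := by
      intro Δ hΔ
      rw [Finset.mem_filter, SimpleGraph.mem_cliqueFinset_iff] at hΔ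
      rw [Finset.mem_powersetCard]
      refine ⟨fun v hv => ?_, hΔ.1.card_eq⟩
      have h := hΔ.2 v hv
      rw [IsLight, hz2, not_and_or, not_le, not_le] at h
      rw [Finset.mem_union]
      exact h.imp (fun h => Finset.mem_filter.2 ⟨Finset.mem_univ _, h⟩)
        (fun h => Finset.mem_filter.2 ⟨Finset.mem_univ _, h⟩)
    have h2 := Finset.card_le_card h1
    rw [Finset.card_powersetCard] at h2
    have h3 : (((D ∪ T).card.choose 3 : ℕ) : ℝ) ≤ ((D ∪ T).card : ℝ) ^ 3 / (Nat.factorial 3 : ℕ) :=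
      Nat.choose_le_pow_div 3 _
    have h4 : ((D ∪ T).card : ℝ) ≤ (D.card : ℝ) + T.card := by
      exact_mod_cast Finset.card_union_le D T
    have h5 : ((D ∪ T).card : ℝ) ^ 3 ≤ ((D.card : ℝ) + T.card) ^ 3 := by gcongr
    have h6 : ((Nat.factorial 3 : ℕ) : ℝ) = 6 := by norm_num [Nat.factorial]
    rw [h6] at h3
    refine (Nat.cast_le.2 h2).trans (h3.trans ?_)
    linarith
  refine hN.trans ?_
  set h : ℝ := (D.card : ℝ) + T.card with hh
  have hh0 : 0 ≤ h := by positivity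
  have ht0 : 0 < t := lt_of_lt_of_le htbar0 htt
  have hb : tbar * h ≤ 6 * x * (tbar + t) := by
    rw [hh]; nlinarith
  have hc : (tbar * h) ^ 3 ≤ (6 * x * (tbar + t)) ^ 3 := by gcongr
  have hd : (6 * x * (tbar + t)) ^ 3 = 216 * (ε * tbar) * (tbar + t) ^ 3 := by
    rw [← hx3]; ring
  have he : (tbar + t) ^ 3 ≤ 50 * t * tbar ^ 2 := by
    have e1 : (tbar + t) ^ 2 ≤ (5 * tbar) ^ 2 := by gcongr; linarith
    have e2 : tbar + t ≤ 2 * t := by linarith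
    have e3 : (tbar + t) ^ 2 * (tbar + t) ≤ (5 * tbar) ^ 2 * (2 * t) := by gcongr
    linarith
  have hf : tbar ^ 3 * h ^ 3 ≤ tbar ^ 3 * (10800 * ε * t) := by
    have e4 : 216 * (ε * tbar) * (tbar + t) ^ 3 ≤ 216 * (ε * tbar) * (50 * t * tbar ^ 2) := by
      gcongr
    have e5 : tbar ^ 3 * h ^ 3 = (tbar * h) ^ 3 := by ring
    rw [e5]
    refine hc.trans (hd.le.trans (e4.trans (le_of_eq ?_)))
    ring
  have hg := le_of_mul_le_mul_left hf (by positivity)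
  have : 0 < ε * t := by positivity
  linarith
end

section
/- Let G be a finite simple graph with m edges and t ≥ 1 triangles. Let 0 < ε < 1 and let m̄, t̄ be positive reals with m̄ ≥ m/6 and t/4 ≤ t̄ ≤ t. Let (H, L) be a partition of the vertex set such that every heavy vertex belongs to H and every light vertex belongs to L (an appropriate partition). Then (1 − 2000·ε)·t ≤ Σ_{v ∈ L} wt(v) ≤ t. -/
open Finset SimpleGraph

/-- A vertex `v` is heavy (w.r.t. `ε`, `m̄`, `t̄`) if
`deg v > 2m̄/(ε t̄)^{1/3}` or `t_v > 2 t̄^{2/3}/ε^{1/3}`. -/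
def IsHeavy {V : Type*} [Fintype V] [DecidableEq V]
    (G : SimpleGraph V) [DecidableRel G.Adj] (ε mbar tbar : ℝ) (v : V) : Prop :=
  2 * mbar / (ε * tbar) ^ ((1 : ℝ) / 3) < (G.degree v : ℝ) ∨
  2 * tbar ^ ((2 : ℝ) / 3) / ε ^ ((1 : ℝ) / 3)
    < (((G.cliqueFinset 3).filter (fun Δ => v ∈ Δ)).card : ℝ)

/-- The weight of a triangle `Δ` with respect to a vertex set `L`:
`1/ℓ` where `ℓ > 0` is the number of vertices of `Δ` in `L`, and `0` if
`Δ` has no vertex in `L`. -/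
noncomputable def triWeight {V : Type*} [DecidableEq V] (L : Finset V) (Δ : Finset V) : ℝ :=
  if (Δ ∩ L).card = 0 then 0 else 1 / ((Δ ∩ L).card : ℝ)

/-- Summing weights vertex by vertex counts the triangles that meet `L`. -/
lemma sum_weights_eq {V : Type*} [DecidableEq V] (T : Finset (Finset V)) (L : Finset V) :
    (∑ v ∈ L, ∑ Δ ∈ T.filter (fun Δ => v ∈ Δ), triWeight L Δ)
      = ((T.filter (fun Δ => ¬ (Δ ∩ L).card = 0)).card : ℝ) := by
  simp_rw [Finset.sum_filter]
  rw [Finset.sum_comm, Finset.card_filter]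
  push_cast
  refine Finset.sum_congr rfl fun Δ _ => ?_
  rw [← Finset.sum_filter, Finset.sum_const, nsmul_eq_mul]
  have h : L.filter (fun v => v ∈ Δ) = Δ ∩ L := by
    ext v; simp [and_comm]
  rw [h]
  unfold triWeight
  by_cases h0 : (Δ ∩ L).card = 0
  · simp [h0]
  · have : ((Δ ∩ L).card : ℝ) ≠ 0 := by exact_mod_cast h0
    simp only [h0, if_false, not_false_eq_true, if_true]
    field_simp

lemma sum_tri {V : Type*} [Fintype V] [DecidableEq V]
    (G : SimpleGraph V) [DecidableRel G.Adj] :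
    ∑ v, ((G.cliqueFinset 3).filter (fun Δ => v ∈ Δ)).card = 3 * (G.cliqueFinset 3).card := by
  simp_rw [Finset.card_filter]
  rw [Finset.sum_comm]
  have : ∀ Δ ∈ G.cliqueFinset 3, (∑ v : V, if v ∈ Δ then 1 else 0) = 3 := by
    intro Δ hΔ
    rw [SimpleGraph.mem_cliqueFinset_iff] at hΔ
    simp [hΔ.card_eq]
  rw [Finset.sum_congr rfl this]
  simp [mul_comm]

lemma card_filter_mul_le {V : Type*} [Fintype V] (f : V → ℕ) (c : ℝ) (S : Finset V)
    (h : ∀ v ∈ S, c ≤ (f v : ℝ)) : (S.card : ℝ) * c ≤ ((∑ v, f v : ℕ) : ℝ) := by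
  calc (S.card : ℝ) * c = ∑ v ∈ S, c := by simp
    _ ≤ ∑ v ∈ S, (f v : ℝ) := Finset.sum_le_sum h
    _ ≤ ∑ v, (f v : ℝ) :=
      Finset.sum_le_sum_of_subset_of_nonneg (Finset.subset_univ _) (by intros; positivity)
    _ = _ := by push_cast; rfl

/-- For an appropriate partition `(H, L)` (every heavy vertex is in `H`, every
light vertex is in `L`), if `m̄ ≥ m/6` and `t/4 ≤ t̄ ≤ t`, then
`(1 − 2000ε)·t ≤ Σ_{v ∈ L} wt(v) ≤ t`. -/
theorem sum_weights_appropriate_partition_bounds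
    {V : Type*} [Fintype V] [DecidableEq V]
    (G : SimpleGraph V) [DecidableRel G.Adj]
    (ε mbar tbar : ℝ) (hε0 : 0 < ε) (hε1 : ε < 1)
    (hmbar0 : 0 < mbar) (htbar0 : 0 < tbar)
    (ht1 : 1 ≤ (G.cliqueFinset 3).card)
    (hm : (G.edgeFinset.card : ℝ) / 6 ≤ mbar)
    (ht4 : ((G.cliqueFinset 3).card : ℝ) / 4 ≤ tbar)
    (htt : tbar ≤ ((G.cliqueFinset 3).card : ℝ))
    (H L : Finset V) (hHL : H ∪ L = Finset.univ) (hdisj : Disjoint H L)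
    (hH : ∀ v, IsHeavy G ε mbar tbar v → v ∈ H)
    (hL : ∀ v, IsLight G ε mbar tbar v → v ∈ L) :
    (1 - 2000 * ε) * ((G.cliqueFinset 3).card : ℝ)
        ≤ (∑ v ∈ L, ∑ Δ ∈ (G.cliqueFinset 3).filter (fun Δ => v ∈ Δ), triWeight L Δ)
      ∧ (∑ v ∈ L, ∑ Δ ∈ (G.cliqueFinset 3).filter (fun Δ => v ∈ Δ), triWeight L Δ)
        ≤ ((G.cliqueFinset 3).card : ℝ) := by
  rw [sum_weights_eq]
  refine ⟨?_, by exact_mod_cast Finset.card_filter_le _ _⟩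
  have hsplit := Finset.card_filter_add_card_filter_not (s := G.cliqueFinset 3)
    (fun Δ => (Δ ∩ L).card = 0)
  have hsub : (G.cliqueFinset 3).filter (fun Δ => (Δ ∩ L).card = 0) ⊆ H.powersetCard 3 := by
    intro Δ hΔ
    rw [Finset.mem_filter, SimpleGraph.mem_cliqueFinset_iff, Finset.card_eq_zero] at hΔ
    rw [Finset.mem_powersetCard]
    refine ⟨fun v hv => ?_, hΔ.1.card_eq⟩
    have h1 : v ∈ H ∪ L := by rw [hHL]; exact Finset.mem_univ v
    rcases Finset.mem_union.1 h1 with h | h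
    · exact h
    · have : v ∈ Δ ∩ L := Finset.mem_inter.2 ⟨hv, h⟩
      rw [hΔ.2] at this
      simp at this
  have hcard := Finset.card_le_card hsub
  rw [Finset.card_powersetCard] at hcard
  have hch : ((H.card.choose 3 : ℕ) : ℝ) ≤ (H.card : ℝ) ^ 3 / 6 := by
    have := Nat.choose_le_pow_div (α := ℝ) 3 H.card
    simpa [Nat.factorial] using this
  have hcR : (((G.cliqueFinset 3).filter (fun Δ => (Δ ∩ L).card = 0)).card : ℝ)
      ≤ (H.card : ℝ) ^ 3 / 6 := le_trans (by exact_mod_cast hcard) hch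
  have hsplitR : (((G.cliqueFinset 3).filter (fun Δ => (Δ ∩ L).card = 0)).card : ℝ)
      + (((G.cliqueFinset 3).filter (fun Δ => ¬ (Δ ∩ L).card = 0)).card : ℝ)
      = ((G.cliqueFinset 3).card : ℝ) := by exact_mod_cast hsplit
  -- bound on the size of `H`
  set s : ℝ := (ε * tbar) ^ ((1 : ℝ) / 3) with hs
  have hs0 : 0 < s := by positivity
  have hs3 : s ^ 3 = ε * tbar := by
    rw [hs, ← Real.rpow_natCast, ← Real.rpow_mul (by positivity)]
    norm_num
  have hq : tbar ^ ((2 : ℝ) / 3) / (2 * ε ^ ((1 : ℝ) / 3)) = tbar / (2 * s) := by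
    have h1 : tbar ^ ((2 : ℝ) / 3) * tbar ^ ((1 : ℝ) / 3) = tbar := by
      rw [← Real.rpow_add htbar0]; norm_num
    have h2 : s = ε ^ ((1 : ℝ) / 3) * tbar ^ ((1 : ℝ) / 3) := by
      rw [hs, Real.mul_rpow hε0.le htbar0.le]
    have h3 : 0 < ε ^ ((1 : ℝ) / 3) := by positivity
    rw [div_eq_div_iff (by positivity) (by positivity), h2]
    linear_combination (2 * ε ^ ((1 : ℝ) / 3)) * h1
  set A := H.filter (fun v => 2 * mbar / s < (G.degree v : ℝ)) with hA
  set B := H.filter (fun v => ¬ 2 * mbar / s < (G.degree v : ℝ)) with hB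
  have hAB : A.card + B.card = H.card := Finset.card_filter_add_card_filter_not _
  have hAb : (A.card : ℝ) * (2 * mbar / s) ≤ ((∑ v, G.degree v : ℕ) : ℝ) :=
    card_filter_mul_le _ _ _ fun v hv => (Finset.mem_filter.1 hv).2.le
  have hBb : (B.card : ℝ) * (tbar / (2 * s)) ≤
      ((∑ v, ((G.cliqueFinset 3).filter (fun Δ => v ∈ Δ)).card : ℕ) : ℝ) := by
    refine card_filter_mul_le _ _ _ fun v hv => ?_
    rw [hB, Finset.mem_filter, not_lt] at hv
    by_contra hcon
    push Not at hcon
    have hl : v ∈ L := hL v ⟨hv.2, by rw [hq]; exact hcon.le⟩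
    exact Finset.disjoint_left.1 hdisj hv.1 hl
  rw [sum_tri] at hBb
  rw [SimpleGraph.sum_degrees_eq_twice_card_edges] at hAb
  push_cast at hAb hBb
  have hABR : (A.card : ℝ) + B.card = H.card := by exact_mod_cast hAB
  generalize ((G.cliqueFinset 3).card : ℝ) = t at *
  generalize (A.card : ℝ) = a at *
  generalize (B.card : ℝ) = b at *
  have hh0 : (0 : ℝ) ≤ H.card := by positivity
  generalize (H.card : ℝ) = h at *
  have ha : a ≤ 6 * s := by
    have h1 : a * (2 * mbar / s) ≤ 12 * mbar := by linarith
    rw [← mul_div_assoc, div_le_iff₀ hs0] at h1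
    by_contra hc
    push Not at hc
    nlinarith
  have hb : b * tbar ≤ 6 * t * s := by
    rw [← mul_div_assoc, div_le_iff₀ (by positivity)] at hBb
    linarith
  have hht : h * tbar ≤ 6 * s * (tbar + t) := by
    rw [← hABR]
    nlinarith
  have ht0 : 0 < t := by linarith
  have hcube : (h * tbar) ^ 3 ≤ (6 * s * (tbar + t)) ^ 3 := by gcongr
  have hp1 : (tbar + t) ^ 2 ≤ (5 * tbar) ^ 2 := by gcongr; linarith
  have hp : (tbar + t) ^ 3 ≤ 50 * t * tbar ^ 2 := by
    calc (tbar + t) ^ 3 = (tbar + t) ^ 2 * (tbar + t) := by ring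
      _ ≤ (5 * tbar) ^ 2 * (2 * t) := by gcongr; linarith
      _ = _ := by ring
  have hfin : h ^ 3 * tbar ^ 3 ≤ (10800 * ε * t) * tbar ^ 3 := by
    calc h ^ 3 * tbar ^ 3 = (h * tbar) ^ 3 := by ring
      _ ≤ (6 * s * (tbar + t)) ^ 3 := hcube
      _ = 216 * (ε * tbar) * (tbar + t) ^ 3 := by rw [← hs3]; ring
      _ ≤ 216 * (ε * tbar) * (50 * t * tbar ^ 2) := by gcongr
      _ = _ := by ring
  have hfin2 : h ^ 3 ≤ 10800 * ε * t := le_of_mul_le_mul_right hfin (by positivity)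
  have : 0 < ε * t := by positivity
  nlinarith
end

section
/- Let G be a finite simple graph, ≺ the degree-then-label order on its vertices, and v a vertex of degree d_v ≥ 1. Consider the random experiment: choose x uniformly at random from Γ(v); let u be the ≺-smaller of v and x; choose w uniformly at random from Γ(u); let Z = deg(u) if w is adjacent to both v and x and x ≺ w, and Z = 0 otherwise. Then the expected value of Z equals t_v / d_v, where t_v is the number of triangles of G containing v. -/
open Finset SimpleGraph

/-- The `≺`-smaller of the two vertices `v` and `x`. -/
def smallerEndpoint {V : Type*} [Fintype V] [LinearOrder V] (G : SimpleGraph V)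
    [DecidableRel G.Adj] (v x : V) : V :=
  if prec G v x then v else x

/-- Choose `x` uniformly in `Γ(v)`, let `u` be the `≺`-smaller of `v` and `x`,
choose `w` uniformly in `Γ(u)`, and let `Z = deg u` if `w` is adjacent to both
`v` and `x` and `x ≺ w`, and `Z = 0` otherwise. Then `E[Z] = t_v / d_v`. -/
theorem expectation_Z_eq_tv_div_dv
    {V : Type*} [Fintype V] [LinearOrder V]
    (G : SimpleGraph V) [DecidableRel G.Adj] (v : V) (hd : 1 ≤ G.degree v) :
    (1 / (G.degree v : ℝ)) *
        ∑ x ∈ G.neighborFinset v,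
          (1 / (G.degree (smallerEndpoint G v x) : ℝ)) *
            ∑ w ∈ G.neighborFinset (smallerEndpoint G v x),
              (if G.Adj v w ∧ G.Adj x w ∧ prec G x w
                then (G.degree (smallerEndpoint G v x) : ℝ) else 0)
      = (((G.cliqueFinset 3).filter (fun Δ => v ∈ Δ)).card : ℝ)
          / (G.degree v : ℝ) := by
  have hinner : ∀ x ∈ G.neighborFinset v,
      (1 / (G.degree (smallerEndpoint G v x) : ℝ)) *
            ∑ w ∈ G.neighborFinset (smallerEndpoint G v x),
              (if G.Adj v w ∧ G.Adj x w ∧ prec G x w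
                then (G.degree (smallerEndpoint G v x) : ℝ) else 0)
      = (((univ : Finset V).filter
          (fun w => G.Adj v w ∧ G.Adj x w ∧ prec G x w)).card : ℝ) := by
    intro x hx
    rw [mem_neighborFinset] at hx
    have hu : smallerEndpoint G v x = v ∨ smallerEndpoint G v x = x := by
      unfold smallerEndpoint
      split_ifs <;> simp
    have hpos : (G.degree (smallerEndpoint G v x) : ℝ) ≠ 0 := by
      have h : 0 < G.degree (smallerEndpoint G v x) := by
        rw [degree_pos_iff_exists_adj]
        rcases hu with h | h <;> rw [h]
        · exact ⟨x, hx⟩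
        · exact ⟨v, hx.symm⟩
      exact_mod_cast h.ne'
    have hf : (G.neighborFinset (smallerEndpoint G v x)).filter
          (fun w => G.Adj v w ∧ G.Adj x w ∧ prec G x w)
        = (univ : Finset V).filter (fun w => G.Adj v w ∧ G.Adj x w ∧ prec G x w) := by
      ext w
      simp only [mem_filter, mem_neighborFinset, mem_univ, true_and, and_iff_right_iff_imp]
      intro h
      rcases hu with h' | h' <;> rw [h']
      · exact h.1
      · exact h.2.1
    rw [← Finset.sum_filter, Finset.sum_const, hf, nsmul_eq_mul]
    field_simp
  rw [Finset.sum_congr rfl hinner, ← Nat.cast_sum, ← Finset.card_sigma]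
  rw [one_div, inv_mul_eq_div]
  congr 2
  apply Finset.card_bij (fun (p : Σ _ : V, V) _ => ({v, p.1, p.2} : Finset V))
  · rintro ⟨x, w⟩ h
    simp only [mem_sigma, mem_neighborFinset, mem_filter, mem_univ, true_and] at h
    simp only [mem_filter, mem_cliqueFinset_iff, is3Clique_triple_iff]
    exact ⟨⟨h.1, h.2.1, h.2.2.1⟩, by simp⟩
  · rintro ⟨x, w⟩ h ⟨y, z⟩ h' he
    simp only [mem_sigma, mem_neighborFinset, mem_filter, mem_univ, true_and] at h h'
    obtain ⟨h1, h2, h3, h4⟩ := h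
    obtain ⟨k1, k2, k3, k4⟩ := h'
    have e1 := h1.ne
    have e2 := h2.ne
    have e3 := h3.ne
    have f3 := k3.ne
    simp only at he
    have hx : x ∈ ({v, y, z} : Finset V) := he ▸ (by simp)
    have hw : w ∈ ({v, y, z} : Finset V) := he ▸ (by simp)
    simp only [mem_insert, mem_singleton] at hx hw
    rcases hx with hx | hx | hx
    · exact absurd hx.symm e1
    · rcases hw with hw | hw | hw
      · exact absurd hw.symm e2
      · exact absurd (hx.trans hw.symm) e3
      · rw [hx, hw]
    · rcases hw with hw | hw | hw
      · exact absurd hw.symm e2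
      · subst hx hw
        exfalso
        rcases h4 with h4 | ⟨h4, h5⟩ <;> rcases k4 with k4 | ⟨k4, k5⟩
        · omega
        · omega
        · omega
        · exact lt_asymm h5 k5
      · exact absurd (hx.trans hw.symm) e3
  · intro s hs
    simp only [mem_filter, mem_cliqueFinset_iff] at hs
    obtain ⟨hs, hv⟩ := hs
    have key : ∃ a b, G.Adj v a ∧ G.Adj v b ∧ G.Adj a b ∧ s = {v, a, b} := by
      obtain ⟨a, b, c, hab, hac, hbc, rfl⟩ := is3Clique_iff.1 hs
      simp only [mem_insert, mem_singleton] at hv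
      rcases hv with rfl | rfl | rfl
      · exact ⟨b, c, hab, hac, hbc, rfl⟩
      · exact ⟨a, c, hab.symm, hbc, hac, by ext; simp; tauto⟩
      · exact ⟨a, b, hac.symm, hbc.symm, hab, by ext; simp; tauto⟩
    obtain ⟨a, b, ha, hb, hab, rfl⟩ := key
    have ht : prec G a b ∨ prec G b a := by
      unfold prec
      rcases lt_trichotomy (G.degree a) (G.degree b) with h | h | h
      · exact Or.inl (Or.inl h)
      · rcases lt_or_gt_of_ne hab.ne with h' | h'
        · exact Or.inl (Or.inr ⟨h, h'⟩)
        · exact Or.inr (Or.inr ⟨h.symm, h'⟩)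
      · exact Or.inr (Or.inl h)
    rcases ht with ht | ht
    · refine ⟨⟨a, b⟩, ?_, rfl⟩
      simp only [mem_sigma, mem_neighborFinset, mem_filter, mem_univ, true_and]
      exact ⟨ha, hb, hab, ht⟩
    · refine ⟨⟨b, a⟩, ?_, by ext; simp; tauto⟩
      simp only [mem_sigma, mem_neighborFinset, mem_filter, mem_univ, true_and]
      exact ⟨hb, ha, hab.symm, ht⟩
end

section
/- Let n ≥ 4 be an even natural number and let G be the simple graph on the vertex set Fin n ⊕ Fin n (left side L and right side R) with the following edges: a cross edge between inl i and inr j if and only if i ≠ j; a left edge between inl i and inl j if and only if {i, j} = {2a, 2a+1} for some a; and a right edge between inr i and inr j if and only if {i, j} = {2a, 2a+1} for some a. Then every vertex of G has degree exactly n, and the number of triangles of G is exactly n·(n − 2). -/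
open Finset SimpleGraph

open scoped Classical

/-- The underlying relation: a cross edge between `inl i` and `inr j` iff
`i ≠ j`; a matching edge within each side pairing index `2a` with `2a+1`. -/
def matchingBipartiteRel (n : ℕ) : (Fin n ⊕ Fin n) → (Fin n ⊕ Fin n) → Prop
  | Sum.inl i, Sum.inr j => i ≠ j
  | Sum.inl i, Sum.inl j => ∃ a : ℕ, i.val = 2 * a ∧ j.val = 2 * a + 1
  | Sum.inr i, Sum.inr j => ∃ a : ℕ, i.val = 2 * a ∧ j.val = 2 * a + 1
  | Sum.inr _, Sum.inl _ => False

/-- The graph obtained from `K_{n,n}` by removing the perfect matching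
`{(inl i, inr i)}` and adding a perfect matching within each side pairing
index `2a` with `2a+1`. -/
def matchingBipartiteGraph (n : ℕ) : SimpleGraph (Fin n ⊕ Fin n) :=
  SimpleGraph.fromRel (matchingBipartiteRel n)

/-- partner of an index -/
def mbPartner (n : ℕ) (hn : Even n) (i : Fin n) : Fin n :=
  ⟨if i.val % 2 = 0 then i.val + 1 else i.val - 1, by
    obtain ⟨m, hm⟩ := hn
    have := i.isLt
    split_ifs <;> omega⟩

lemma mbPartner_val (n : ℕ) (hn : Even n) (i : Fin n) :
    (mbPartner n hn i).val = if i.val % 2 = 0 then i.val + 1 else i.val - 1 := rfl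

lemma mbPartner_ne (n : ℕ) (hn : Even n) (i : Fin n) : mbPartner n hn i ≠ i := by
  intro h
  have := congrArg Fin.val h
  rw [mbPartner_val] at this
  split_ifs at this <;> omega

lemma mbPartner_invol (n : ℕ) (hn : Even n) (i : Fin n) :
    mbPartner n hn (mbPartner n hn i) = i := by
  apply Fin.ext
  rw [mbPartner_val, mbPartner_val]
  split_ifs <;> omega

lemma mbPartner_parity (n : ℕ) (hn : Even n) (i : Fin n) :
    (mbPartner n hn i).val % 2 = 0 ↔ ¬ i.val % 2 = 0 := by
  rw [mbPartner_val]
  split_ifs <;> omega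

lemma mb_pair_iff (n : ℕ) (hn : Even n) (i j : Fin n) :
    (i ≠ j ∧ ((∃ a : ℕ, i.val = 2 * a ∧ j.val = 2 * a + 1) ∨
      (∃ a : ℕ, j.val = 2 * a ∧ i.val = 2 * a + 1))) ↔ j = mbPartner n hn i := by
  constructor
  · rintro ⟨_, ⟨a, h1, h2⟩ | ⟨a, h1, h2⟩⟩ <;> apply Fin.ext <;> rw [mbPartner_val] <;>
      split_ifs <;> omega
  · rintro rfl
    refine ⟨(mbPartner_ne n hn i).symm, ?_⟩
    rw [mbPartner_val]
    by_cases h : i.val % 2 = 0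
    · left
      refine ⟨i.val / 2, ?_, ?_⟩ <;> (try split_ifs) <;> omega
    · right
      refine ⟨i.val / 2, ?_, ?_⟩ <;> (try split_ifs) <;> omega

lemma mb_ll (n : ℕ) (hn : Even n) (i j : Fin n) :
    (matchingBipartiteGraph n).Adj (Sum.inl i) (Sum.inl j) ↔ j = mbPartner n hn i := by
  rw [← mb_pair_iff]
  simp [matchingBipartiteGraph, SimpleGraph.fromRel_adj, matchingBipartiteRel]

lemma mb_rr (n : ℕ) (hn : Even n) (i j : Fin n) :
    (matchingBipartiteGraph n).Adj (Sum.inr i) (Sum.inr j) ↔ j = mbPartner n hn i := by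
  rw [← mb_pair_iff]
  simp [matchingBipartiteGraph, SimpleGraph.fromRel_adj, matchingBipartiteRel]

lemma mb_lr (n : ℕ) (i j : Fin n) :
    (matchingBipartiteGraph n).Adj (Sum.inl i) (Sum.inr j) ↔ i ≠ j := by
  simp [matchingBipartiteGraph, SimpleGraph.fromRel_adj, matchingBipartiteRel]

lemma mb_rl (n : ℕ) (i j : Fin n) :
    (matchingBipartiteGraph n).Adj (Sum.inr i) (Sum.inl j) ↔ i ≠ j := by
  simp [matchingBipartiteGraph, SimpleGraph.fromRel_adj, matchingBipartiteRel, eq_comm]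

/-- The triangle attached to a pair of indices. -/
noncomputable def mbTri (n : ℕ) (hn : Even n) (x : Σ _ : Fin n, Fin n) :
    Finset (Fin n ⊕ Fin n) :=
  if x.1.val % 2 = 0 then {Sum.inl x.1, Sum.inl (mbPartner n hn x.1), Sum.inr x.2}
  else {Sum.inr x.1, Sum.inr (mbPartner n hn x.1), Sum.inl x.2}

/-- Index set of triangles. -/
noncomputable def mbIdx (n : ℕ) (hn : Even n) : Finset (Σ _ : Fin n, Fin n) :=
  Finset.univ.sigma fun i => ({i, mbPartner n hn i} : Finset (Fin n))ᶜ

lemma mem_mbIdx (n : ℕ) (hn : Even n) (i j : Fin n) :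
    (⟨i, j⟩ : Σ _ : Fin n, Fin n) ∈ mbIdx n hn ↔ j ≠ i ∧ j ≠ mbPartner n hn i := by
  simp [mbIdx]

lemma card_mbIdx (n : ℕ) (hn : Even n) : (mbIdx n hn).card = n * (n - 2) := by
  rw [mbIdx, Finset.card_sigma]
  have h : ∀ i : Fin n, (({i, mbPartner n hn i} : Finset (Fin n))ᶜ).card = n - 2 := by
    intro i
    rw [Finset.card_compl, Finset.card_pair (mbPartner_ne n hn i).symm, Fintype.card_fin]
  rw [Finset.sum_congr rfl fun i _ => h i]
  simp

lemma mbTri_inj (n : ℕ) (hn : Even n) (x y : Σ _ : Fin n, Fin n)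
    (h : mbTri n hn x = mbTri n hn y) : x = y := by
  obtain ⟨i, j⟩ := x
  obtain ⟨k, l⟩ := y
  have hi := mbPartner_parity n hn i
  have hk := mbPartner_parity n hn k
  have hi' := mbPartner_ne n hn i
  have hk' := mbPartner_ne n hn k
  have e := fun v => Finset.ext_iff.1 h v
  have e1 := e (Sum.inl i)
  have e2 := e (Sum.inr i)
  have e3 := e (Sum.inl j)
  have e4 := e (Sum.inr j)
  have e5 := e (Sum.inl (mbPartner n hn i))
  have e6 := e (Sum.inr (mbPartner n hn i))
  simp only [mbTri] at e1 e2 e3 e4 e5 e6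
  split_ifs at e1 e2 e3 e4 e5 e6 <;> simp at e1 e2 e3 e4 e5 e6 <;> grind

lemma mbTri_left (n : ℕ) (hn : Even n) (i j : Fin n) (h1 : j ≠ i)
    (h2 : j ≠ mbPartner n hn i) :
    ∃ x ∈ mbIdx n hn, mbTri n hn x = {Sum.inl i, Sum.inl (mbPartner n hn i), Sum.inr j} := by
  by_cases h : i.val % 2 = 0
  · exact ⟨⟨i, j⟩, (mem_mbIdx ..).2 ⟨h1, h2⟩, by simp [mbTri, h]⟩
  · refine ⟨⟨mbPartner n hn i, j⟩, (mem_mbIdx ..).2 ⟨h2, by rwa [mbPartner_invol]⟩, ?_⟩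
    have := (mbPartner_parity n hn i).2 h
    simp only [mbTri, this, if_true, mbPartner_invol]
    exact Finset.insert_comm _ _ _

lemma mbTri_right (n : ℕ) (hn : Even n) (i j : Fin n) (h1 : j ≠ i)
    (h2 : j ≠ mbPartner n hn i) :
    ∃ x ∈ mbIdx n hn, mbTri n hn x = {Sum.inr i, Sum.inr (mbPartner n hn i), Sum.inl j} := by
  by_cases h : i.val % 2 = 0
  · refine ⟨⟨mbPartner n hn i, j⟩, (mem_mbIdx ..).2 ⟨h2, by rwa [mbPartner_invol]⟩, ?_⟩
    have : ¬ (mbPartner n hn i).val % 2 = 0 := fun h' => (mbPartner_parity n hn i).1 h' h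
    simp only [mbTri, this, if_false, mbPartner_invol]
    exact Finset.insert_comm _ _ _
  · exact ⟨⟨i, j⟩, (mem_mbIdx ..).2 ⟨h1, h2⟩, by simp [mbTri, h]⟩

lemma mb_clique (n : ℕ) (hn : Even n) :
    (matchingBipartiteGraph n).cliqueFinset 3 = (mbIdx n hn).image (mbTri n hn) := by
  ext s
  rw [SimpleGraph.mem_cliqueFinset_iff, SimpleGraph.is3Clique_iff, Finset.mem_image]
  constructor
  · rintro ⟨a, b, c, hab, hac, hbc, rfl⟩
    rcases a with a | a <;> rcases b with b | b <;> rcases c with c | c <;>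
      simp only [mb_ll n hn, mb_rr n hn, mb_lr, mb_rl] at hab hac hbc
    · subst hab; subst hac; exact absurd hbc.symm (mbPartner_ne n hn _)
    · subst hab
      exact mbTri_left n hn a c hac.symm hbc.symm
    · subst hac
      obtain ⟨x, hx, e⟩ := mbTri_left n hn a b hab.symm hbc
      exact ⟨x, hx, by rw [e]; grind⟩
    · subst hbc
      obtain ⟨x, hx, e⟩ := mbTri_right n hn b a hab hac
      exact ⟨x, hx, by rw [e]; grind⟩
    · subst hbc
      obtain ⟨x, hx, e⟩ := mbTri_left n hn b a hab hac
      exact ⟨x, hx, by rw [e]; grind⟩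
    · subst hac
      obtain ⟨x, hx, e⟩ := mbTri_right n hn a b hab.symm hbc
      exact ⟨x, hx, by rw [e]; grind⟩
    · subst hab
      exact mbTri_right n hn a c hac.symm hbc.symm
    · subst hab; subst hac; exact absurd hbc.symm (mbPartner_ne n hn _)
  · rintro ⟨⟨i, j⟩, hx, rfl⟩
    rw [mem_mbIdx] at hx
    by_cases h : i.val % 2 = 0
    · exact ⟨_, _, _, (mb_ll n hn _ _).2 rfl, (mb_lr ..).2 hx.1.symm, (mb_lr ..).2 hx.2.symm,
        by simp [mbTri, h]⟩
    · exact ⟨_, _, _, (mb_rr n hn _ _).2 rfl, (mb_rl ..).2 hx.1.symm, (mb_rl ..).2 hx.2.symm,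
        by simp [mbTri, h]⟩

lemma mb_degree (n : ℕ) (hn : Even n) (hn4 : 4 ≤ n) (v : Fin n ⊕ Fin n) :
    (matchingBipartiteGraph n).degree v = n := by
  rw [← SimpleGraph.card_neighborFinset_eq_degree]
  rcases v with i | i
  · have : (matchingBipartiteGraph n).neighborFinset (Sum.inl i) =
        Finset.disjSum {mbPartner n hn i} ({i}ᶜ : Finset (Fin n)) := by
      ext w
      rcases w with w | w <;> simp [mb_ll n hn, mb_lr, eq_comm]
    rw [this, Finset.card_disjSum, Finset.card_compl]
    simp
    omega
  · have : (matchingBipartiteGraph n).neighborFinset (Sum.inr i) =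
        Finset.disjSum ({i}ᶜ : Finset (Fin n)) {mbPartner n hn i} := by
      ext w
      rcases w with w | w <;> simp [mb_rr n hn, mb_rl, eq_comm]
    rw [this, Finset.card_disjSum, Finset.card_compl]
    simp
    omega

/-- For even `n ≥ 4`, every vertex of the graph has degree `n` and the number
of triangles is exactly `n · (n − 2)`. -/
theorem matchingBipartiteGraph_degree_and_triangles
    (n : ℕ) (hn : Even n) (hn4 : 4 ≤ n) :
    (∀ v, (matchingBipartiteGraph n).degree v = n) ∧
      ((matchingBipartiteGraph n).cliqueFinset 3).card = n * (n - 2) := by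
  refine ⟨mb_degree n hn hn4, ?_⟩
  rw [mb_clique n hn, Finset.card_image_of_injective _ (mbTri_inj n hn), card_mbIdx]
end

section
/- Let n ≥ 2 and let k ≤ n be an even natural number. Let G be the simple graph on the vertex set Fin n ⊕ Fin n with the following edges: a cross edge between inl i and inr j if and only if ¬(i = j ∧ i < k); a left edge between inl i and inl j if and only if {i, j} = {2a, 2a+1} for some a with 2a+1 < k; and a right edge between inr i and inr j if and only if {i, j} = {2a, 2a+1} for some a with 2a+1 < k. Then every vertex of G has degree exactly n, and the number of triangles of G is exactly k·(n − 2). -/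
open Finset SimpleGraph

open scoped Classical

/-- The underlying relation: a cross edge between `inl i` and `inr j` iff
`¬(i = j ∧ i < k)`; a matching edge within each side pairing index `2a` with
`2a+1` for `2a+1 < k`. -/
def partialMatchingRel (n k : ℕ) : (Fin n ⊕ Fin n) → (Fin n ⊕ Fin n) → Prop
  | Sum.inl i, Sum.inr j => ¬(i = j ∧ i.val < k)
  | Sum.inl i, Sum.inl j => ∃ a : ℕ, i.val = 2 * a ∧ j.val = 2 * a + 1 ∧ 2 * a + 1 < k
  | Sum.inr i, Sum.inr j => ∃ a : ℕ, i.val = 2 * a ∧ j.val = 2 * a + 1 ∧ 2 * a + 1 < k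
  | Sum.inr _, Sum.inl _ => False

/-- The graph obtained from `K_{n,n}` by removing the size-`k` matching
`{(inl i, inr i) : i < k}` and adding, within each side, a matching of size
`k/2` pairing index `2a` with index `2a+1` for `2a+1 < k`. -/
def partialMatchingGraph (n k : ℕ) : SimpleGraph (Fin n ⊕ Fin n) :=
  SimpleGraph.fromRel (partialMatchingRel n k)

/-- The partner index: `2a ↔ 2a+1`. -/
def pmPartner (n : ℕ) (i : Fin n) : Fin n :=
  if h : (if i.val % 2 = 0 then i.val + 1 else i.val - 1) < n then
    ⟨(if i.val % 2 = 0 then i.val + 1 else i.val - 1), h⟩ else i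

lemma pmPartner_val {n k : ℕ} (hk : Even k) (hkn : k ≤ n) (i : Fin n) (hi : i.val < k) :
    (pmPartner n i).val = if i.val % 2 = 0 then i.val + 1 else i.val - 1 := by
  have h : (if i.val % 2 = 0 then i.val + 1 else i.val - 1) < n := by
    obtain ⟨m, rfl⟩ := hk
    split_ifs <;> omega
  unfold pmPartner
  rw [dif_pos h]

lemma pm_rel_iff {n k : ℕ} (hk : Even k) (hkn : k ≤ n) (i j : Fin n) :
    (i ≠ j ∧ ((∃ a : ℕ, i.val = 2 * a ∧ j.val = 2 * a + 1 ∧ 2 * a + 1 < k) ∨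
      (∃ a : ℕ, j.val = 2 * a ∧ i.val = 2 * a + 1 ∧ 2 * a + 1 < k))) ↔
      (i.val < k ∧ j = pmPartner n i) := by
  constructor
  · rintro ⟨_, ⟨a, h1, h2, h3⟩ | ⟨a, h1, h2, h3⟩⟩
    · have hi : i.val < k := by omega
      refine ⟨hi, Fin.ext ?_⟩
      rw [pmPartner_val hk hkn i hi]
      split_ifs <;> omega
    · have hi : i.val < k := by omega
      refine ⟨hi, Fin.ext ?_⟩
      rw [pmPartner_val hk hkn i hi]
      split_ifs <;> omega
  · rintro ⟨hi, hj⟩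
    have hj' := congrArg Fin.val hj
    rw [pmPartner_val hk hkn i hi] at hj'
    rw [ne_eq, Fin.ext_iff]
    obtain ⟨m, rfl⟩ := hk
    split_ifs at hj' with h
    · exact ⟨by omega, Or.inl ⟨i.val / 2, by omega, by omega, by omega⟩⟩
    · exact ⟨by omega, Or.inr ⟨i.val / 2, by omega, by omega, by omega⟩⟩

lemma pm_adj_ll {n k : ℕ} (hk : Even k) (hkn : k ≤ n) (i j : Fin n) :
    (partialMatchingGraph n k).Adj (Sum.inl i) (Sum.inl j) ↔ (i.val < k ∧ j = pmPartner n i) := by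
  rw [← pm_rel_iff hk hkn]
  simp [partialMatchingGraph, partialMatchingRel]

lemma pm_adj_rr {n k : ℕ} (hk : Even k) (hkn : k ≤ n) (i j : Fin n) :
    (partialMatchingGraph n k).Adj (Sum.inr i) (Sum.inr j) ↔ (i.val < k ∧ j = pmPartner n i) := by
  rw [← pm_rel_iff hk hkn]
  simp [partialMatchingGraph, partialMatchingRel]

lemma pm_adj_lr {n k : ℕ} (i j : Fin n) :
    (partialMatchingGraph n k).Adj (Sum.inl i) (Sum.inr j) ↔ ¬ (i = j ∧ i.val < k) := by
  simp [partialMatchingGraph, partialMatchingRel]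

lemma pm_adj_rl {n k : ℕ} (i j : Fin n) :
    (partialMatchingGraph n k).Adj (Sum.inr i) (Sum.inl j) ↔ ¬ (i = j ∧ i.val < k) := by
  rw [SimpleGraph.adj_comm, pm_adj_lr]
  constructor <;> (rintro h ⟨rfl, h2⟩; exact h ⟨rfl, h2⟩)

lemma pm_degree_aux {n k : ℕ} (i : Fin n) :
    #{j : Fin n | i.val < k ∧ j = pmPartner n i} + #{j : Fin n | ¬ (i = j ∧ i.val < k)} = n := by
  by_cases hi : i.val < k
  · have hn : 0 < n := i.pos
    have h : ({j : Fin n | ¬ (i = j ∧ i.val < k)} : Finset (Fin n)) = univ.erase i := by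
      ext j; simp [hi, eq_comm]
    have h' : ({j : Fin n | i.val < k ∧ j = pmPartner n i} : Finset (Fin n))
        = {pmPartner n i} := by
      ext j; simp [hi]
    rw [h, h', Finset.card_singleton, Finset.card_erase_of_mem (Finset.mem_univ _),
      Finset.card_univ, Fintype.card_fin]
    omega
  · simp [hi]

lemma pm_degree {n k : ℕ} (hk : Even k) (hkn : k ≤ n) (v : Fin n ⊕ Fin n) :
    (partialMatchingGraph n k).degree v = n := by
  have key : (partialMatchingGraph n k).degree v
      = #{w : Fin n ⊕ Fin n | (partialMatchingGraph n k).Adj v w} := by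
    rw [← SimpleGraph.card_neighborFinset_eq_degree]
    congr 1
    ext w
    simp
  rw [key, Finset.card_filter, Fintype.sum_sum_type, ← Finset.card_filter, ← Finset.card_filter]
  rcases v with i | i
  · simp only [pm_adj_ll hk hkn, pm_adj_lr]
    exact pm_degree_aux i
  · simp only [pm_adj_rr hk hkn, pm_adj_rl]
    rw [add_comm]
    exact pm_degree_aux i

/-- Triangle attached to a pair `(i, j)`. -/
noncomputable def pmTri (n : ℕ) (p : Fin n × Fin n) : Finset (Fin n ⊕ Fin n) :=
  if p.1.val % 2 = 0 then {Sum.inl p.1, Sum.inl (pmPartner n p.1), Sum.inr p.2}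
  else {Sum.inr p.1, Sum.inr (pmPartner n p.1), Sum.inl p.2}

/-- Index set of triangles. -/
noncomputable def pmIdx (n k : ℕ) : Finset (Fin n × Fin n) :=
  {p | p.1.val < k ∧ p.2 ≠ p.1 ∧ p.2 ≠ pmPartner n p.1}

lemma pmPartner_facts {n k : ℕ} (hk : Even k) (hkn : k ≤ n) (i : Fin n) (hi : i.val < k) :
    (pmPartner n i).val < k ∧ pmPartner n (pmPartner n i) = i ∧ pmPartner n i ≠ i ∧
      ((pmPartner n i).val % 2 = 0 ↔ ¬ i.val % 2 = 0) := by
  have h := pmPartner_val hk hkn i hi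
  have hlt : (pmPartner n i).val < k := by
    obtain ⟨m, rfl⟩ := hk
    split_ifs at h <;> omega
  have h2 := pmPartner_val hk hkn _ hlt
  refine ⟨hlt, ?_, ?_, ?_⟩
  · apply Fin.ext
    rw [h2]
    split_ifs at * <;> omega
  · rw [ne_eq, Fin.ext_iff]
    split_ifs at h <;> omega
  · split_ifs at h <;> omega

lemma pmIdx_card {n k : ℕ} (hk : Even k) (hkn : k ≤ n) : #(pmIdx n k) = k * (n - 2) := by
  rw [pmIdx, Finset.card_filter, Fintype.sum_prod_type]
  have h : ∀ i : Fin n, (∑ j : Fin n,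
      if i.val < k ∧ j ≠ i ∧ j ≠ pmPartner n i then 1 else 0) = if i.val < k then n - 2 else 0 := by
    intro i
    by_cases hi : i.val < k
    · rw [← Finset.card_filter]
      have hf : ({j : Fin n | i.val < k ∧ j ≠ i ∧ j ≠ pmPartner n i} : Finset (Fin n))
          = univ \ {i, pmPartner n i} := by
        ext j; simp [hi]
      rw [hf, Finset.card_sdiff_of_subset (by simp),
        Finset.card_pair (pmPartner_facts hk hkn i hi).2.2.1.symm]
      simp [hi]
    · simp [hi]
  simp only [h]
  rw [← Finset.sum_filter, Finset.sum_const, smul_eq_mul]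
  congr 1
  rw [Fin.card_filter_val_lt]
  omega

lemma pmTri_injOn {n k : ℕ} (hk : Even k) (hkn : k ≤ n) :
    Set.InjOn (pmTri n) (pmIdx n k : Set (Fin n × Fin n)) := by
  rintro ⟨i, j⟩ hp ⟨i', j'⟩ hq h
  simp only [pmIdx, Finset.coe_filter, Set.mem_setOf_eq, Finset.mem_univ, true_and] at hp hq
  obtain ⟨_, _, h3, h4⟩ := pmPartner_facts hk hkn i hp.1
  obtain ⟨_, _, h3', h4'⟩ := pmPartner_facts hk hkn i' hq.1
  rw [Finset.ext_iff] at h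
  have a1 := h (Sum.inl i)
  have a2 := h (Sum.inr i)
  have a3 := h (Sum.inl (pmPartner n i))
  have a4 := h (Sum.inr (pmPartner n i))
  have a5 := h (Sum.inl j)
  have a6 := h (Sum.inr j)
  clear h
  unfold pmTri at *
  dsimp only at *
  split_ifs at * <;> simp at a1 a2 a3 a4 a5 a6 <;> grind

lemma pmTri_mem {n k : ℕ} (hk : Even k) (hkn : k ≤ n) (p : Fin n × Fin n) (hp : p ∈ pmIdx n k) :
    pmTri n p ∈ (partialMatchingGraph n k).cliqueFinset 3 := by
  obtain ⟨i, j⟩ := p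
  simp only [pmIdx, Finset.mem_filter, Finset.mem_univ, true_and] at hp
  obtain ⟨h1, h2, h3⟩ := hp
  rw [SimpleGraph.mem_cliqueFinset_iff]
  unfold pmTri
  dsimp only
  split_ifs
  · rw [SimpleGraph.is3Clique_triple_iff, pm_adj_ll hk hkn, pm_adj_lr, pm_adj_lr]
    grind
  · rw [SimpleGraph.is3Clique_triple_iff, pm_adj_rr hk hkn, pm_adj_rl, pm_adj_rl]
    grind

/-- A matching edge on the left plus a right vertex. -/
lemma pm_surj_l {n k : ℕ} (hk : Even k) (hkn : k ≤ n) (i j : Fin n) (hi : i.val < k)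
    (h1 : j ≠ i) (h2 : j ≠ pmPartner n i) :
    ∃ p ∈ pmIdx n k, pmTri n p = {Sum.inl i, Sum.inl (pmPartner n i), Sum.inr j} := by
  obtain ⟨f1, f2, f3, f4⟩ := pmPartner_facts hk hkn i hi
  by_cases he : i.val % 2 = 0
  · exact ⟨(i, j), by simp [pmIdx, *], by simp [pmTri, he]⟩
  · refine ⟨(pmPartner n i, j), by simp [pmIdx, *], ?_⟩
    have he' := f4.2 he
    simp only [pmTri, he', f2, if_true]
    ext x; simp only [Finset.mem_insert, Finset.mem_singleton]; tauto

/-- A matching edge on the right plus a left vertex. -/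
lemma pm_surj_r {n k : ℕ} (hk : Even k) (hkn : k ≤ n) (i j : Fin n) (hi : i.val < k)
    (h1 : j ≠ i) (h2 : j ≠ pmPartner n i) :
    ∃ p ∈ pmIdx n k, pmTri n p = {Sum.inr i, Sum.inr (pmPartner n i), Sum.inl j} := by
  obtain ⟨f1, f2, f3, f4⟩ := pmPartner_facts hk hkn i hi
  by_cases he : i.val % 2 = 0
  · refine ⟨(pmPartner n i, j), by simp [pmIdx, *], ?_⟩
    have he' : ¬ (pmPartner n i).val % 2 = 0 := fun h => f4.1 h he
    simp only [pmTri, he', f2, if_false]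
    ext x; simp only [Finset.mem_insert, Finset.mem_singleton]; tauto
  · exact ⟨(i, j), by simp [pmIdx, *], by simp [pmTri, he]⟩

lemma pm_surj {n k : ℕ} (hk : Even k) (hkn : k ≤ n) (s : Finset (Fin n ⊕ Fin n))
    (hs : s ∈ (partialMatchingGraph n k).cliqueFinset 3) : ∃ p ∈ pmIdx n k, pmTri n p = s := by
  rw [SimpleGraph.mem_cliqueFinset_iff, SimpleGraph.is3Clique_iff] at hs
  obtain ⟨a, b, c, hab, hac, hbc, rfl⟩ := hs
  have perm1 : ({a, b, c} : Finset (Fin n ⊕ Fin n)) = {a, c, b} := by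
    ext x; simp only [Finset.mem_insert, Finset.mem_singleton]; tauto
  have perm2 : ({a, b, c} : Finset (Fin n ⊕ Fin n)) = {b, c, a} := by
    ext x; simp only [Finset.mem_insert, Finset.mem_singleton]; tauto
  rcases a with a | a <;> rcases b with b | b <;> rcases c with c | c <;>
    simp only [pm_adj_ll hk hkn, pm_adj_rr hk hkn, pm_adj_lr, pm_adj_rl] at hab hac hbc
  · have := pmPartner_facts hk hkn a hab.1
    have := pmPartner_facts hk hkn b hbc.1
    grind
  · obtain ⟨hi, rfl⟩ := hab
    have := pmPartner_facts hk hkn a hi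
    exact pm_surj_l hk hkn a c hi (by grind) (by grind)
  · obtain ⟨hi, rfl⟩ := hac
    have := pmPartner_facts hk hkn a hi
    rw [perm1]
    exact pm_surj_l hk hkn a b hi (by grind) (by grind)
  · obtain ⟨hi, rfl⟩ := hbc
    have := pmPartner_facts hk hkn b hi
    rw [perm2]
    exact pm_surj_r hk hkn b a hi (by grind) (by grind)
  · obtain ⟨hi, rfl⟩ := hbc
    have := pmPartner_facts hk hkn b hi
    rw [perm2]
    exact pm_surj_l hk hkn b a hi (by grind) (by grind)
  · obtain ⟨hi, rfl⟩ := hac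
    have := pmPartner_facts hk hkn a hi
    rw [perm1]
    exact pm_surj_r hk hkn a b hi (by grind) (by grind)
  · obtain ⟨hi, rfl⟩ := hab
    have := pmPartner_facts hk hkn a hi
    exact pm_surj_r hk hkn a c hi (by grind) (by grind)
  · have := pmPartner_facts hk hkn a hab.1
    have := pmPartner_facts hk hkn b hbc.1
    grind

/-- For `n ≥ 2` and even `k ≤ n`, every vertex of the graph has degree `n` and
the number of triangles is exactly `k · (n − 2)`. -/
theorem partialMatchingGraph_degree_and_triangles
    (n k : ℕ) (hn : 2 ≤ n) (hk : Even k) (hkn : k ≤ n) :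
    (∀ v, (partialMatchingGraph n k).degree v = n) ∧
      ((partialMatchingGraph n k).cliqueFinset 3).card = k * (n - 2) := by
  refine ⟨pm_degree hk hkn, ?_⟩
  rw [← pmIdx_card hk hkn]
  symm
  exact Finset.card_bij (fun p _ => pmTri n p) (fun p hp => pmTri_mem hk hkn p hp)
    (fun p hp q hq h => pmTri_injOn hk hkn (by exact_mod_cast hp) (by exact_mod_cast hq) h)
    (fun s hs => by
      obtain ⟨p, hp, h⟩ := pm_surj hk hkn s hs
      exact ⟨p, hp, h⟩)
end

section
/- Let n and r be natural numbers with 1 ≤ r and 2r ≤ n. Let M be a bipartite graph between two disjoint copies L and R of Fin n in which every vertex has degree exactly r, let B_L be an r-regular simple graph on L, and let B_R be an r-regular simple graph on R. Let G be the simple graph on L ∪ R whose edges are: all cross pairs (u, w) with u ∈ L, w ∈ R that are NOT edges of M, together with all edges of B_L and all edges of B_R. Then the number of triangles of G is at least r·n·(n − 2r). -/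
open Finset SimpleGraph

open scoped Classical

/-- The graph on `L ⊕ R` (two copies of `Fin n`) whose edges are all cross
pairs not in the bipartite graph `M`, together with the edges of `B_L` inside
the left side and the edges of `B_R` inside the right side. -/
def lowerBoundGraph (n : ℕ) (M : Fin n → Fin n → Prop)
    (BL BR : SimpleGraph (Fin n)) : SimpleGraph (Fin n ⊕ Fin n) :=
  SimpleGraph.fromRel (fun x y =>
    match x, y with
    | Sum.inl i, Sum.inr j => ¬ M i j
    | Sum.inl i, Sum.inl j => BL.Adj i j
    | Sum.inr i, Sum.inr j => BR.Adj i j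
    | Sum.inr _, Sum.inl _ => False)

/-- Triples `(u, v, w)` with `u v` an edge of `B` and `w` not `M`-related to `u` or `v`. -/
noncomputable def lbTriples (n : ℕ) (M : Fin n → Fin n → Prop) (B : SimpleGraph (Fin n)) :
    Finset (Σ _ : Fin n, Σ _ : Fin n, Fin n) :=
  Finset.univ.sigma fun u => (B.neighborFinset u).sigma fun v =>
    Finset.univ.filter fun w => ¬ M u w ∧ ¬ M v w

theorem mem_lbTriples (n : ℕ) (M : Fin n → Fin n → Prop) (B : SimpleGraph (Fin n))
    (u v w : Fin n) :
    (⟨u, v, w⟩ : Σ _ : Fin n, Σ _ : Fin n, Fin n) ∈ lbTriples n M B ↔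
      B.Adj u v ∧ ¬ M u w ∧ ¬ M v w := by
  simp [lbTriples]

theorem card_lbTriples (n r : ℕ) (M : Fin n → Fin n → Prop) (B : SimpleGraph (Fin n))
    (hM : ∀ i, (Finset.univ.filter (fun j => M i j)).card = r)
    (hB : ∀ v, B.degree v = r) :
    r * n * (n - 2 * r) ≤ (lbTriples n M B).card := by
  have key : ∀ u v, n - 2 * r ≤ (Finset.univ.filter fun w => ¬ M u w ∧ ¬ M v w).card := by
    intro u v
    have h1 := Finset.card_filter_add_card_filter_not (s := (Finset.univ : Finset (Fin n)))
      (fun w => M u w ∨ M v w)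
    have h2 : (Finset.univ.filter fun w => M u w ∨ M v w).card ≤ r + r := by
      rw [Finset.filter_or]
      exact (Finset.card_union_le _ _).trans (by rw [hM, hM])
    simp only [not_or, Finset.card_univ, Fintype.card_fin] at h1
    omega
  unfold lbTriples
  simp only [Finset.card_sigma]
  calc r * n * (n - 2 * r) = ∑ u : Fin n, ∑ v ∈ B.neighborFinset u, (n - 2 * r) := by
        simp [hB]; ring
    _ ≤ _ := Finset.sum_le_sum fun u _ => Finset.sum_le_sum fun v _ => key u v

/-- Encoding of oriented triples as a vertex set plus an orientation bit. -/
noncomputable def lbMap (n : ℕ) :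
    (Σ _ : Fin n, Σ _ : Fin n, Fin n) ⊕ (Σ _ : Fin n, Σ _ : Fin n, Fin n) →
      Finset (Fin n ⊕ Fin n) × Bool
  | Sum.inl ⟨u, v, w⟩ => ({Sum.inl u, Sum.inl v, Sum.inr w}, decide (u < v))
  | Sum.inr ⟨u, v, w⟩ => ({Sum.inr u, Sum.inr v, Sum.inl w}, decide (u < v))

theorem lb_same {n : ℕ} {u v u' v' : Fin n} (h : u ≠ v) (h' : u' ≠ v')
    (h1 : u = u' ∨ u = v') (h2 : v = u' ∨ v = v') (h3 : u < v ↔ u' < v') :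
    u = u' ∧ v = v' := by
  grind

/-- If `M` is an `r`-regular bipartite graph between the two sides and
`B_L`, `B_R` are `r`-regular graphs on the sides, then the graph obtained from
`K_{n,n}` by removing the edges of `M` and adding the edges of `B_L` and `B_R`
has at least `r · n · (n − 2r)` triangles. -/
theorem lowerBoundGraph_triangles_ge
    (n r : ℕ) (hr : 1 ≤ r) (hrn : 2 * r ≤ n)
    (M : Fin n → Fin n → Prop)
    (hML : ∀ i, (Finset.univ.filter (fun j => M i j)).card = r)
    (hMR : ∀ j, (Finset.univ.filter (fun i => M i j)).card = r)
    (BL BR : SimpleGraph (Fin n))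
    (hBL : ∀ v, BL.degree v = r) (hBR : ∀ v, BR.degree v = r) :
    r * n * (n - 2 * r) ≤ ((lowerBoundGraph n M BL BR).cliqueFinset 3).card := by
  have hcard : ((lbTriples n M BL).disjSum (lbTriples n (fun j i => M i j) BR)).card ≤
      ((lowerBoundGraph n M BL BR).cliqueFinset 3 ×ˢ (Finset.univ : Finset Bool)).card := by
    apply Finset.card_le_card_of_injOn (lbMap n)
    · rintro (⟨u, v, w⟩ | ⟨u, v, w⟩) hx
      · have hx := (mem_lbTriples ..).1 (Finset.inl_mem_disjSum.1 hx)
        have := hx.1.ne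
        refine Finset.mem_coe.2 (Finset.mem_product.2 ⟨?_, Finset.mem_univ _⟩)
        refine mem_cliqueFinset_iff.2 ?_
        simp only [lbMap]
        convert is3Clique_triple_iff.2 ?_
        simp [lowerBoundGraph, hx, this]
      · have hx := (mem_lbTriples ..).1 (Finset.inr_mem_disjSum.1 hx)
        have := hx.1.ne
        refine Finset.mem_coe.2 (Finset.mem_product.2 ⟨?_, Finset.mem_univ _⟩)
        refine mem_cliqueFinset_iff.2 ?_
        simp only [lbMap]
        convert is3Clique_triple_iff.2 ?_
        simp [lowerBoundGraph, hx, this]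
    · rintro (⟨u, v, w⟩ | ⟨u, v, w⟩) hx (⟨u', v', w'⟩ | ⟨u', v', w'⟩) hy hxy
      · have hx := ((mem_lbTriples ..).1 (Finset.inl_mem_disjSum.1 hx)).1.ne
        have hy := ((mem_lbTriples ..).1 (Finset.inl_mem_disjSum.1 hy)).1.ne
        simp only [lbMap, Prod.mk.injEq, decide_eq_decide] at hxy
        have a := (Finset.ext_iff.1 hxy.1 (Sum.inl u)).1 (by simp)
        have b := (Finset.ext_iff.1 hxy.1 (Sum.inl v)).1 (by simp)
        have c := (Finset.ext_iff.1 hxy.1 (Sum.inr w)).1 (by simp)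
        simp at a b c
        obtain ⟨rfl, rfl⟩ := lb_same hx hy a b hxy.2
        rw [c]
      · have hx := ((mem_lbTriples ..).1 (Finset.inl_mem_disjSum.1 hx)).1.ne
        simp only [lbMap, Prod.mk.injEq, decide_eq_decide] at hxy
        have a := (Finset.ext_iff.1 hxy.1 (Sum.inl u)).1 (by simp)
        have b := (Finset.ext_iff.1 hxy.1 (Sum.inl v)).1 (by simp)
        simp at a b
        exact absurd (a.trans b.symm) hx
      · have hx := ((mem_lbTriples ..).1 (Finset.inr_mem_disjSum.1 hx)).1.ne
        simp only [lbMap, Prod.mk.injEq, decide_eq_decide] at hxy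
        have a := (Finset.ext_iff.1 hxy.1 (Sum.inr u)).1 (by simp)
        have b := (Finset.ext_iff.1 hxy.1 (Sum.inr v)).1 (by simp)
        simp at a b
        exact absurd (a.trans b.symm) hx
      · have hx := ((mem_lbTriples ..).1 (Finset.inr_mem_disjSum.1 hx)).1.ne
        have hy := ((mem_lbTriples ..).1 (Finset.inr_mem_disjSum.1 hy)).1.ne
        simp only [lbMap, Prod.mk.injEq, decide_eq_decide] at hxy
        have a := (Finset.ext_iff.1 hxy.1 (Sum.inr u)).1 (by simp)
        have b := (Finset.ext_iff.1 hxy.1 (Sum.inr v)).1 (by simp)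
        have c := (Finset.ext_iff.1 hxy.1 (Sum.inl w)).1 (by simp)
        simp at a b c
        obtain ⟨rfl, rfl⟩ := lb_same hx hy a b hxy.2
        rw [c]
  rw [Finset.card_disjSum, Finset.card_product] at hcard
  have h1 := card_lbTriples n r M BL hML hBL
  have h2 := card_lbTriples n r (fun j i => M i j) BR hMR hBR
  simp only [Finset.card_univ, Fintype.card_bool] at hcard
  omega
end

section
/- Let s ≥ 2 and p ≥ 1 be natural numbers. Let G₁ be the simple graph on vertex set Fin 4 × Fin s × Fin p (four parts A, B, C, D given by the first coordinate being 0, 1, 2, 3 respectively, each part divided into s blocks of size p by the second coordinate) with the following edges and no others: (0,i,a) is adjacent to (1,j,b) if and only if i ≠ j; (2,i,c) is adjacent to (3,j,d) if and only if i ≠ j; (1,i,b) is adjacent to (2,j,c) if and only if i = j; (3,i,d) is adjacent to (0,j,a) if and only if i = j. Then G₁ is triangle-free, and every vertex of G₁ has degree exactly s·p. -/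
open Finset SimpleGraph

open scoped Classical

/-- The underlying relation of the four-part block graph on
`Fin 4 × Fin s × Fin p`: parts `A, B, C, D` are indicated by the first
coordinate being `0, 1, 2, 3`; `A`–`B` and `C`–`D` are joined completely
except between blocks of equal index, and `B`–`C` and `D`–`A` are joined
exactly between blocks of equal index. -/
def fourPartRel (s p : ℕ) (x y : Fin 4 × Fin s × Fin p) : Prop :=
  (x.1.val = 0 ∧ y.1.val = 1 ∧ x.2.1 ≠ y.2.1) ∨
  (x.1.val = 2 ∧ y.1.val = 3 ∧ x.2.1 ≠ y.2.1) ∨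
  (x.1.val = 1 ∧ y.1.val = 2 ∧ x.2.1 = y.2.1) ∨
  (x.1.val = 3 ∧ y.1.val = 0 ∧ x.2.1 = y.2.1)

/-- The four-part block graph `G₁` on `Fin 4 × Fin s × Fin p`. -/
def fourPartGraph (s p : ℕ) : SimpleGraph (Fin 4 × Fin s × Fin p) :=
  SimpleGraph.fromRel (fourPartRel s p)

/-- The neighbours of `v` are parametrised by block index and position. -/
lemma fourPart_degree_aux (s p : ℕ) (k : Fin 4) (i : Fin s) (a : Fin p) (e u : Fin 4)
    (h : ∀ l j b, (fourPartGraph s p).Adj (k, i, a) (l, j, b) ↔ l = if j = i then e else u) :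
    (fourPartGraph s p).degree (k, i, a) = s * p := by
  have key : (fourPartGraph s p).neighborFinset (k, i, a) =
      (Finset.univ : Finset (Fin s × Fin p)).image
        (fun q => ((if q.1 = i then e else u), q.1, q.2)) := by
    ext ⟨l, j, b⟩
    rw [SimpleGraph.mem_neighborFinset, h, Finset.mem_image]
    constructor
    · intro hl
      exact ⟨(j, b), Finset.mem_univ _, by simp [hl]⟩
    · rintro ⟨⟨j', b'⟩, -, hq⟩
      simp only [Prod.mk.injEq] at hq
      obtain ⟨h1, rfl, rfl⟩ := hq
      exact h1.symm
  rw [← SimpleGraph.card_neighborFinset_eq_degree, key, Finset.card_image_of_injective]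
  · simp
  · rintro ⟨j, b⟩ ⟨j', b'⟩ hq
    simp only [Prod.mk.injEq] at hq
    simp [hq.2.1, hq.2.2]

lemma fourPart_parity (s p : ℕ) (x y : Fin 4 × Fin s × Fin p)
    (h : (fourPartGraph s p).Adj x y) : x.1.val % 2 ≠ y.1.val % 2 := by
  simp only [fourPartGraph, SimpleGraph.fromRel_adj, fourPartRel] at h
  omega

/-- For `s ≥ 2` and `p ≥ 1`, the four-part block graph `G₁` is triangle-free
and every vertex has degree exactly `s · p`. -/
theorem fourPartGraph_triangleFree_and_degree
    (s p : ℕ) (hs : 2 ≤ s) (hp : 1 ≤ p) :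
    (fourPartGraph s p).CliqueFree 3 ∧
      ∀ v, (fourPartGraph s p).degree v = s * p := by
  constructor
  · intro t ht
    obtain ⟨x, y, z, hxy, hxz, hyz, -⟩ := SimpleGraph.is3Clique_iff.mp ht
    have h1 := fourPart_parity s p _ _ hxy
    have h2 := fourPart_parity s p _ _ hxz
    have h3 := fourPart_parity s p _ _ hyz
    omega
  · rintro ⟨k, i, a⟩
    fin_cases k
    · apply fourPart_degree_aux s p _ i a 3 1
      intro l j b
      fin_cases l <;> by_cases hj : j = i <;>
        simp [fourPartGraph, fourPartRel, hj, eq_comm (a := i)]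
    · apply fourPart_degree_aux s p _ i a 2 0
      intro l j b
      fin_cases l <;> by_cases hj : j = i <;>
        simp [fourPartGraph, fourPartRel, hj, eq_comm (a := i)]
    · apply fourPart_degree_aux s p _ i a 1 3
      intro l j b
      fin_cases l <;> by_cases hj : j = i <;>
        simp [fourPartGraph, fourPartRel, hj, eq_comm (a := i)]
    · apply fourPart_degree_aux s p _ i a 0 2
      intro l j b
      fin_cases l <;> by_cases hj : j = i <;>
        simp [fourPartGraph, fourPartRel, hj, eq_comm (a := i)]
end

section
/- Let s ≥ 4 and p ≥ 1 be natural numbers, and let G₁ be the four-part graph on Fin 4 × Fin s × Fin p defined by: (0,i,a) ~ (1,j,b) iff i ≠ j; (2,i,c) ~ (3,j,d) iff i ≠ j; (1,i,b) ~ (2,j,c) iff i = j; (3,i,d) ~ (0,j,a) iff i = j; and no other edges. Let i₁, i₂, i₃, i₄ ∈ Fin s be pairwise distinct indices and let a* = (0,i₁,a), b* = (1,i₂,b), c* = (2,i₃,c), d* = (3,i₄,d) be vertices in the corresponding blocks. Let G₂ be the graph obtained from G₁ by deleting the edges {a*, b*} and {c*, d*} and adding the edges {a*, c*} and {b*, d*}.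 Then every vertex of G₂ has degree exactly s·p, and the number of triangles of G₂ is exactly 4·p. -/
open Finset SimpleGraph

open scoped Classical

/-- Explicit adjacency in the modified graph. -/
def modAdj (s p : ℕ) (A B C D : Fin 4 × Fin s × Fin p) (x y : Fin 4 × Fin s × Fin p) : Prop :=
  ((fourPartRel s p x y ∨ fourPartRel s p y x) ∧
    ¬ ((x = A ∧ y = B) ∨ (x = B ∧ y = A) ∨ (x = C ∧ y = D) ∨ (x = D ∧ y = C))) ∨
  ((x = A ∧ y = C) ∨ (x = C ∧ y = A) ∨ (x = B ∧ y = D) ∨ (x = D ∧ y = B))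

lemma degree_of_param {V W : Type*} [Fintype V] [Fintype W] (G : SimpleGraph V) (v : V)
    (f : W → V) (hf : Function.Injective f) (h : ∀ y, G.Adj v y ↔ ∃ w, f w = y) :
    G.degree v = Fintype.card W := by
  rw [← SimpleGraph.card_neighborFinset_eq_degree, ← Finset.card_univ,
    ← Finset.card_image_of_injective _ hf]
  congr 1
  ext y
  simp [h]

/-- The four families of triangles. -/
def triFam (s p : ℕ) (i₁ i₂ i₃ i₄ : Fin s) (a b c d : Fin p) (t : Fin 4 × Fin p) :
    Finset (Fin 4 × Fin s × Fin p) :=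
  if t.1 = 0 then {(0, i₁, a), (2, i₃, c), (1, i₃, t.2)}
  else if t.1 = 1 then {(0, i₁, a), (2, i₃, c), (3, i₁, t.2)}
  else if t.1 = 2 then {(1, i₂, b), (3, i₄, d), (0, i₄, t.2)}
  else {(1, i₂, b), (3, i₄, d), (2, i₂, t.2)}

/-- Parametrisation of the neighbours of a vertex. -/
noncomputable def nbr (s p : ℕ) (i : Fin s) (u w : Fin 4) (E : Prop) (e g : Fin 4 × Fin s × Fin p)
    (t : Fin s × Fin p) : Fin 4 × Fin s × Fin p :=
  if t.1 = i then (u, t) else if E ∧ (w, t) = e then g else (w, t)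

lemma nbr_inj (s p : ℕ) (i : Fin s) (u w : Fin 4) (E : Prop) (e g : Fin 4 × Fin s × Fin p)
    (huw : u ≠ w) (hgu : g.1 ≠ u) (hgw : g.1 ≠ w) : Function.Injective (nbr s p i u w E e g) := by
  intro t t' h
  unfold nbr at h
  grind

lemma nbr_range (s p : ℕ) (i : Fin s) (u w : Fin 4) (E : Prop) (e g : Fin 4 × Fin s × Fin p)
    (he : e.1 = w) (hei : E → e.2.1 ≠ i) (y : Fin 4 × Fin s × Fin p) :
    (∃ t, nbr s p i u w E e g t = y) ↔
      (y.1 = u ∧ y.2.1 = i) ∨ (y.1 = w ∧ y.2.1 ≠ i ∧ ¬ (E ∧ y = e)) ∨ (E ∧ y = g) := by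
  constructor
  · rintro ⟨t, rfl⟩
    unfold nbr
    split_ifs <;> simp_all
  · rintro (⟨h1, h2⟩ | ⟨h1, h2, h3⟩ | ⟨h1, h2⟩)
    · exact ⟨y.2, by simp [nbr, h2, ← h1]⟩
    · refine ⟨y.2, ?_⟩
      subst h1
      simp only [nbr, h2, if_false, Prod.mk.eta, h3]
    · refine ⟨e.2, ?_⟩
      subst he
      simp [nbr, hei h1, h1, h2]

lemma modAdj_symm {s p : ℕ} {A B C D x y : Fin 4 × Fin s × Fin p}
    (h : modAdj s p A B C D x y) : modAdj s p A B C D y x := by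
  unfold modAdj at *
  tauto

/-- In a triangle with two vertices `x`, `y` in parts of the same parity. -/
lemma tri_case (s p : ℕ) (i₁ i₂ i₃ i₄ : Fin s)
    (h12 : i₁ ≠ i₂) (h13 : i₁ ≠ i₃) (h14 : i₁ ≠ i₄)
    (h23 : i₂ ≠ i₃) (h24 : i₂ ≠ i₄) (h34 : i₃ ≠ i₄)
    (a b c d : Fin p) (x y z : Fin 4 × Fin s × Fin p)
    (hpar : x.1.val % 2 = y.1.val % 2)
    (hxy : modAdj s p (0, i₁, a) (1, i₂, b) (2, i₃, c) (3, i₄, d) x y)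
    (hxz : modAdj s p (0, i₁, a) (1, i₂, b) (2, i₃, c) (3, i₄, d) x z)
    (hyz : modAdj s p (0, i₁, a) (1, i₂, b) (2, i₃, c) (3, i₄, d) y z) :
    ∃ t, triFam s p i₁ i₂ i₃ i₄ a b c d t = {x, y, z} := by
  have hg : (x = (0, i₁, a) ∧ y = (2, i₃, c)) ∨ (x = (2, i₃, c) ∧ y = (0, i₁, a)) ∨
      (x = (1, i₂, b) ∧ y = (3, i₄, d)) ∨ (x = (3, i₄, d) ∧ y = (1, i₂, b)) := by
    rcases hxy with ⟨h, -⟩ | h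
    · exfalso
      unfold fourPartRel at h
      omega
    · exact h
  have key1 : ∀ z : Fin 4 × Fin s × Fin p,
      modAdj s p (0, i₁, a) (1, i₂, b) (2, i₃, c) (3, i₄, d) (0, i₁, a) z →
      modAdj s p (0, i₁, a) (1, i₂, b) (2, i₃, c) (3, i₄, d) (2, i₃, c) z →
      ∃ t, triFam s p i₁ i₂ i₃ i₄ a b c d t = {(0, i₁, a), (2, i₃, c), z} := by
    rintro ⟨z1, z2, z3⟩ h1 h2
    fin_cases z1 <;> simp [modAdj, fourPartRel] at h1 h2
    · exact ⟨(0, z3), by simp [triFam, h2]⟩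
    · exact ⟨(1, z3), by simp [triFam, h1]⟩
  have key2 : ∀ z : Fin 4 × Fin s × Fin p,
      modAdj s p (0, i₁, a) (1, i₂, b) (2, i₃, c) (3, i₄, d) (1, i₂, b) z →
      modAdj s p (0, i₁, a) (1, i₂, b) (2, i₃, c) (3, i₄, d) (3, i₄, d) z →
      ∃ t, triFam s p i₁ i₂ i₃ i₄ a b c d t = {(1, i₂, b), (3, i₄, d), z} := by
    rintro ⟨z1, z2, z3⟩ h1 h2
    fin_cases z1 <;> simp [modAdj, fourPartRel] at h1 h2
    · exact ⟨(2, z3), by simp [triFam, h2]⟩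
    · exact ⟨(3, z3), by simp [triFam, h1]⟩
  rcases hg with ⟨rfl, rfl⟩ | ⟨rfl, rfl⟩ | ⟨rfl, rfl⟩ | ⟨rfl, rfl⟩
  · exact key1 z hxz hyz
  · rw [Finset.insert_comm]; exact key1 z hyz hxz
  · exact key2 z hxz hyz
  · rw [Finset.insert_comm]; exact key2 z hyz hxz

lemma triFam_inj (s p : ℕ) (i₁ i₂ i₃ i₄ : Fin s)
    (h12 : i₁ ≠ i₂) (h13 : i₁ ≠ i₃) (h14 : i₁ ≠ i₄)
    (h23 : i₂ ≠ i₃) (h24 : i₂ ≠ i₄) (h34 : i₃ ≠ i₄)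
    (a b c d : Fin p) : Function.Injective (triFam s p i₁ i₂ i₃ i₄ a b c d) := by
  rintro ⟨t, k⟩ ⟨t', k'⟩ h
  have h0 := fun x => Finset.ext_iff.1 h x
  have e1 := h0 (0, i₁, a)
  have e2 := h0 (1, i₃, k)
  have e3 := h0 (3, i₁, k)
  have e4 := h0 (0, i₄, k)
  have e5 := h0 (2, i₂, k)
  have e6 := h0 (1, i₂, b)
  clear h0 h
  fin_cases t <;> fin_cases t' <;> simp [triFam] at * <;> grind

/-- `G₂` is obtained from `G₁` by deleting the two purple edges
`{a*, b*}`, `{c*, d*}` and adding the two green edges `{a*, c*}`, `{b*, d*}`,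
where `a* ∈ A`, `b* ∈ B`, `c* ∈ C`, `d* ∈ D` lie in blocks with pairwise
distinct indices. Then every vertex has degree `s · p` and the number of
triangles is exactly `4 · p`. -/
theorem modifiedFourPartGraph_degree_and_triangles
    (s p : ℕ) (hs : 4 ≤ s) (hp : 1 ≤ p)
    (i₁ i₂ i₃ i₄ : Fin s)
    (h12 : i₁ ≠ i₂) (h13 : i₁ ≠ i₃) (h14 : i₁ ≠ i₄)
    (h23 : i₂ ≠ i₃) (h24 : i₂ ≠ i₄) (h34 : i₃ ≠ i₄)
    (a b c d : Fin p) :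
    let astar : Fin 4 × Fin s × Fin p := (0, i₁, a)
    let bstar : Fin 4 × Fin s × Fin p := (1, i₂, b)
    let cstar : Fin 4 × Fin s × Fin p := (2, i₃, c)
    let dstar : Fin 4 × Fin s × Fin p := (3, i₄, d)
    let G₂ : SimpleGraph (Fin 4 × Fin s × Fin p) :=
      ((fourPartGraph s p).deleteEdges {s(astar, bstar), s(cstar, dstar)}) ⊔
        SimpleGraph.fromEdgeSet {s(astar, cstar), s(bstar, dstar)}
    (∀ v, G₂.degree v = s * p) ∧ (G₂.cliqueFinset 3).card = 4 * p := by
  intro A B C D G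
  have hadj : ∀ x y, G.Adj x y ↔ modAdj s p A B C D x y := by
    intro x y
    have hAC : A ≠ C := by simp [A, C]
    have hBD : B ≠ D := by simp [B, D]
    have hne : fourPartRel s p x y ∨ fourPartRel s p y x → x ≠ y := by
      rintro h rfl
      unfold fourPartRel at h
      omega
    simp only [G, modAdj, SimpleGraph.sup_adj, SimpleGraph.deleteEdges_adj, fourPartGraph,
      SimpleGraph.fromRel_adj, SimpleGraph.fromEdgeSet_adj, Set.mem_insert_iff,
      Set.mem_singleton_iff, Sym2.eq_iff]
    grind
  constructor
  · rintro ⟨t, i, x⟩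
    have fin : ∀ (u w : Fin 4) (E : Prop) (e g : Fin 4 × Fin s × Fin p),
        u ≠ w → g.1 ≠ u → g.1 ≠ w → e.1 = w → (E → e.2.1 ≠ i) →
        (∀ y, modAdj s p A B C D (t, i, x) y ↔ (y.1 = u ∧ y.2.1 = i) ∨
          (y.1 = w ∧ y.2.1 ≠ i ∧ ¬ (E ∧ y = e)) ∨ (E ∧ y = g)) →
        G.degree (t, i, x) = s * p := by
      intro u w E e g h1 h2 h3 h4 h5 h6
      have := degree_of_param G (t, i, x) (nbr s p i u w E e g)
        (nbr_inj s p i u w E e g h1 h2 h3)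
        (fun y => by rw [hadj, h6, nbr_range s p i u w E e g h4 h5])
      simp only [Fintype.card_prod, Fintype.card_fin] at this
      convert this
    fin_cases t
    · apply fin 3 1 (i = i₁ ∧ x = a) B C <;> try simp [B, C]
      · grind
      · intro y1 y2 y3
        fin_cases y1 <;> simp [modAdj, fourPartRel, A, B, C, D] <;> grind
    · apply fin 2 0 (i = i₂ ∧ x = b) A D <;> try simp [A, D]
      · grind
      · intro y1 y2 y3
        fin_cases y1 <;> simp [modAdj, fourPartRel, A, B, C, D] <;> grind
    · apply fin 1 3 (i = i₃ ∧ x = c) D A <;> try simp [A, D]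
      · grind
      · intro y1 y2 y3
        fin_cases y1 <;> simp [modAdj, fourPartRel, A, B, C, D] <;> grind
    · apply fin 0 2 (i = i₄ ∧ x = d) C B <;> try simp [B, C]
      · grind
      · intro y1 y2 y3
        fin_cases y1 <;> simp [modAdj, fourPartRel, A, B, C, D] <;> grind
  · have himg : G.cliqueFinset 3 =
        Finset.univ.image (triFam s p i₁ i₂ i₃ i₄ a b c d) := by
      ext S
      simp only [SimpleGraph.mem_cliqueFinset_iff, Finset.mem_image, Finset.mem_univ, true_and]
      constructor
      · intro h
        obtain ⟨x, y, z, hxy, hxz, hyz, rfl⟩ := SimpleGraph.is3Clique_iff.1 h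
        rw [hadj] at hxy hxz hyz
        have T := tri_case s p i₁ i₂ i₃ i₄ h12 h13 h14 h23 h24 h34 a b c d
        have hc : x.1.val % 2 = y.1.val % 2 ∨ x.1.val % 2 = z.1.val % 2 ∨
          y.1.val % 2 = z.1.val % 2 := by omega
        rcases hc with hc | hc | hc
        · exact T x y z hc hxy hxz hyz
        · rw [Finset.pair_comm]
          exact T x z y hc hxz hxy (modAdj_symm hyz)
        · rw [Finset.insert_comm, Finset.pair_comm]
          exact T y z x hc hyz (modAdj_symm hxy) (modAdj_symm hxz)
      · rintro ⟨⟨t, k⟩, rfl⟩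
        rw [SimpleGraph.is3Clique_iff]
        fin_cases t
        · refine ⟨_, _, _, ?_, ?_, ?_, rfl⟩ <;> rw [hadj] <;>
            simp [modAdj, fourPartRel, A, B, C, D] <;> grind
        · refine ⟨_, _, _, ?_, ?_, ?_, rfl⟩ <;> rw [hadj] <;>
            simp [modAdj, fourPartRel, A, B, C, D] <;> grind
        · refine ⟨_, _, _, ?_, ?_, ?_, rfl⟩ <;> rw [hadj] <;>
            simp [modAdj, fourPartRel, A, B, C, D] <;> grind
        · refine ⟨_, _, _, ?_, ?_, ?_, rfl⟩ <;> rw [hadj] <;>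
            simp [modAdj, fourPartRel, A, B, C, D] <;> grind
    rw [himg, Finset.card_image_of_injective _
      (triFam_inj s p i₁ i₂ i₃ i₄ h12 h13 h14 h23 h24 h34 a b c d)]
    simp
end
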